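/- Let k ≥ 2 and assume either that f satisfies (f1), (f2), (f3): f(s) ≥ f'(s)(s−β) for all s ≥ β, and (f4): (F/f)'(s) ≥ (n−2)/(2n) for all s > β; or that f satisfies (f1), (f2), (f5): s ↦ s·f'(s)/f(s) is nonincreasing on [β,∞), and (f6): β·f'(β)/f(β) ≤ n/(n−2) with n > 2. Let α* ∈ G_k and let α₁ < α₂ lie in (α*−δ₁, α*+δ₁), with δ₁ as in the δ₁-lemma. Let m_j := u_j(T₁(α_j)) be the first local minimum value of u_j := u(·,α_j), and let P_j(s) := P(s,α_j) along the first decreasing branch of u_j. Then m₁ > m₂ and P₁(m₁) > P₂(m₂). -/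

import Mathlib

open Set Filter MeasureTheory

namespace Paper

noncomputable section

/-- `F s = ∫₀ˢ f t dt`. -/
def Fint (f : ℝ → ℝ) (s : ℝ) : ℝ := ∫ t in (0:ℝ)..s, f t

/-- Hypothesis (f1): `f` is odd, `f 0 = 0`, there are `β > b > 0` with `f > 0` on `(b,∞)`,
`f ≤ 0`, `f ≢ 0` on `[0,b]`, and `F β = 0`. -/
def Hf1 (f : ℝ → ℝ) (b β : ℝ) : Prop :=
  (∀ s, f (-s) = -f s) ∧ f 0 = 0 ∧ 0 < b ∧ b < β ∧
    (∀ s, b < s → 0 < f s) ∧ (∀ s ∈ Icc (0:ℝ) b, f s ≤ 0) ∧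
    (∃ s ∈ Icc (0:ℝ) b, f s ≠ 0) ∧ Fint f β = 0

/-- Hypothesis (f2): `f` continuous on `[0,∞)`, C¹ on `(0,∞)`, `f' ∈ L¹(0,1)`. -/
def Hf2 (f : ℝ → ℝ) : Prop :=
  ContinuousOn f (Ici 0) ∧ (∀ s : ℝ, 0 < s → DifferentiableAt ℝ f s) ∧
    ContinuousOn (deriv f) (Ioi 0) ∧ IntegrableOn (deriv f) (Ioo 0 1)

/-- Hypothesis (f3): `f s ≥ f' s * (s - β)` for `s ≥ β`. -/
def Hf3 (f : ℝ → ℝ) (β : ℝ) : Prop := ∀ s, β ≤ s → deriv f s * (s - β) ≤ f s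

/-- Hypothesis (f4): `(F/f)' s ≥ (n-2)/(2n)` for `s > β`. -/
def Hf4 (n : ℕ) (f : ℝ → ℝ) (β : ℝ) : Prop :=
  ∀ s, β < s → ((n : ℝ) - 2) / (2 * (n : ℝ)) ≤ deriv (fun t => Fint f t / f t) s

/-- Hypothesis (f4'): `(F/f)' s ≥ (n-2)/2` for `s > β`. -/
def Hf4' (n : ℕ) (f : ℝ → ℝ) (β : ℝ) : Prop :=
  ∀ s, β < s → ((n : ℝ) - 2) / 2 ≤ deriv (fun t => Fint f t / f t) s

/-- Hypothesis (f5): `s ↦ s f' s / f s` is nonincreasing on `[β,∞)`. -/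
def Hf5 (f : ℝ → ℝ) (β : ℝ) : Prop := AntitoneOn (fun s => s * deriv f s / f s) (Ici β)

/-- Hypothesis (f6): `β f' β / f β ≤ n/(n-2)`. -/
def Hf6 (n : ℕ) (f : ℝ → ℝ) (β : ℝ) : Prop := β * deriv f β / f β ≤ (n : ℝ) / ((n : ℝ) - 2)

/-- Hypothesis (f1'): `f 0 = 0` and `s f s > 0` for `s > 0`. -/
def Hf1' (f : ℝ → ℝ) : Prop := f 0 = 0 ∧ ∀ s : ℝ, 0 < s → 0 < s * f s

/-- Hypothesis (f3'): `f s ≥ s f' s` for `s > 0`, with strict inequality at points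
arbitrarily close to `0`. -/
def Hf3' (f : ℝ → ℝ) : Prop :=
  (∀ s : ℝ, 0 < s → s * deriv f s ≤ f s) ∧
    ∀ ε : ℝ, 0 < ε → ∃ s ∈ Ioo (0:ℝ) ε, s * deriv f s < f s

/-- `v` is a C² solution of (E) on `(0,∞)`, continuous on `[0,∞)`,
with `v 0 = α` and `v' 0 = 0`. -/
def IVPsol (n : ℕ) (f : ℝ → ℝ) (α : ℝ) (v : ℝ → ℝ) : Prop :=
  v 0 = α ∧ deriv v 0 = 0 ∧ ContinuousOn v (Ici 0) ∧
    (∀ r : ℝ, 0 < r → DifferentiableAt ℝ v r ∧ DifferentiableAt ℝ (deriv v) r) ∧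
    (∀ r : ℝ, 0 < r → deriv (deriv v) r + ((n : ℝ) - 1) / r * deriv v r + f (v r) = 0)

/-- The family `α ↦ u α` of solutions of the IVP, with `u α r` and `u' α r`
continuous in `(α, r)`. -/
def Family (n : ℕ) (f : ℝ → ℝ) (u : ℝ → ℝ → ℝ) : Prop :=
  (∀ α : ℝ, 0 < α → IVPsol n f α (u α)) ∧
    ContinuousOn (fun p : ℝ × ℝ => u p.1 p.2) (Ioi 0 ×ˢ Ici 0) ∧
    ContinuousOn (fun p : ℝ × ℝ => deriv (u p.1) p.2) (Ioi 0 ×ˢ Ici 0)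

/-- The set whose supremum is `Z_k α`, given `T = T_{k-1} α`. -/
def ZsetAux (u : ℝ → ℝ → ℝ) (k : ℕ) (T α : ℝ) : Set ℝ :=
  {r | T < r ∧ ∀ s ∈ Ioo T r, (-1 : ℝ) ^ k * u α s < 0 ∧ 0 < (-1 : ℝ) ^ k * deriv (u α) s}

/-- The pair `(Z_k, T_k)`, with `T₀ = 0`;
`Z_k α = sup {r > T_{k-1} α | (-1)^k u < 0, (-1)^k u' > 0 on (T_{k-1} α, r)}` and
`T_k α = inf {r > Z_k α | u'(r, α) = 0}`. -/
def ZT (u : ℝ → ℝ → ℝ) : ℕ → (ℝ → ℝ) × (ℝ → ℝ)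
  | 0 => (fun _ => 0, fun _ => 0)
  | k + 1 =>
    let Z : ℝ → ℝ := fun α => sSup (ZsetAux u (k + 1) ((ZT u k).2 α) α)
    (Z, fun α => sInf {r | Z α < r ∧ deriv (u α) r = 0})

/-- `Z_k α` (as a real number; the genuine value when the defining set is bounded above). -/
def Zk (u : ℝ → ℝ → ℝ) (k : ℕ) (α : ℝ) : ℝ := (ZT u k).1 α

/-- `T_k α`, with `T₀ = 0`. -/
def Tk (u : ℝ → ℝ → ℝ) (k : ℕ) (α : ℝ) : ℝ := (ZT u k).2 α

/-- The defining set of `Z_k α`; `Z_k α = ∞` iff this set is unbounded above. -/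
def ZsetK (u : ℝ → ℝ → ℝ) (k : ℕ) (α : ℝ) : Set ℝ := ZsetAux u k (Tk u (k - 1) α) α

open Classical in
/-- The value of `u (·, α)` at `Z_k α`, as a limit `r → ∞` when `Z_k α = ∞`. -/
def uAtZ (u : ℝ → ℝ → ℝ) (k : ℕ) (α : ℝ) : ℝ :=
  if BddAbove (ZsetK u k α) then u α (Zk u k α) else limUnder atTop (u α)

open Classical in
/-- The value of `u' (·, α)` at `Z_k α`, as a limit `r → ∞` when `Z_k α = ∞`. -/
def duAtZ (u : ℝ → ℝ → ℝ) (k : ℕ) (α : ℝ) : ℝ :=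
  if BddAbove (ZsetK u k α) then deriv (u α) (Zk u k α) else limUnder atTop (deriv (u α))

open Classical in
/-- `Z_k α` as an extended real number. -/
def ZkE (u : ℝ → ℝ → ℝ) (k : ℕ) (α : ℝ) : WithTop ℝ :=
  if BddAbove (ZsetK u k α) then (Zk u k α : WithTop ℝ) else ⊤

/-- Membership in `F̃_k` (for `α ∈ N_{k-1}`): `(-1)^k u' (r, α) < 0` for all `r > Z_{k-1} α`. -/
def Ftil (u : ℝ → ℝ → ℝ) (k : ℕ) (α : ℝ) : Prop :=
  ∀ r, Zk u (k - 1) α < r → (-1 : ℝ) ^ k * deriv (u α) r < 0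

/-- The sets `N_k` (with `N₀ := (0,∞)`). -/
def Nk (u : ℝ → ℝ → ℝ) : ℕ → Set ℝ
  | 0 => Ioi 0
  | 1 => {α | 0 < α ∧ uAtZ u 1 α = 0 ∧ duAtZ u 1 α < 0}
  | k + 2 => {α | α ∈ Nk u (k + 1) ∧ ¬Ftil u (k + 2) α ∧ uAtZ u (k + 2) α = 0 ∧
      0 < (-1 : ℝ) ^ (k + 2) * duAtZ u (k + 2) α}

/-- The sets `G_k`. -/
def Gk (u : ℝ → ℝ → ℝ) : ℕ → Set ℝ
  | 0 => ∅
  | 1 => {α | 0 < α ∧ uAtZ u 1 α = 0 ∧ duAtZ u 1 α = 0}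
  | k + 2 => {α | α ∈ Nk u (k + 1) ∧ ¬Ftil u (k + 2) α ∧ uAtZ u (k + 2) α = 0 ∧
      duAtZ u (k + 2) α = 0}

/-- The set `F̃_k` (for `k ≥ 2`). -/
def FtilSet (u : ℝ → ℝ → ℝ) (k : ℕ) : Set ℝ := {α | α ∈ Nk u (k - 1) ∧ Ftil u k α}

/-- The set `F_k` (for `k ≥ 2`). -/
def Fk (u : ℝ → ℝ → ℝ) (k : ℕ) : Set ℝ :=
  {α | α ∈ Nk u (k - 1) ∧ ¬Ftil u k α ∧ (-1 : ℝ) ^ k * uAtZ u k α < 0}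

/-- The sets `P_k`. -/
def Pk (u : ℝ → ℝ → ℝ) : ℕ → Set ℝ
  | 0 => ∅
  | 1 => {α | 0 < α ∧ 0 < uAtZ u 1 α}
  | k + 2 => FtilSet u (k + 2) ∪ Fk u (k + 2)

/-- The set of extremal points (zeros of `u' (·, α)`) in `[0, A]`. -/
def ExtSet (u : ℝ → ℝ → ℝ) (α A : ℝ) : Set ℝ := {r | r ∈ Icc 0 A ∧ deriv (u α) r = 0}

/-- The conclusion of the δ₁-lemma (Lemma 4.1): every solution with initial value in
`(α*-δ₁, α*+δ₁)` has exactly `k` extremal points in `[0, T_{k-1}(α*) + a]`, with minimum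
values `< -β` and maximum values `> β`; moreover any two such solutions intersect between
any two of their consecutive extremal points, and in `(T_{k-1}(α*), Z_k(α*))`. -/
def DeltaOneLemma (f : ℝ → ℝ) (β : ℝ) (u : ℝ → ℝ → ℝ) (k : ℕ) (αs a δ₁ : ℝ) : Prop :=
  0 < a ∧ 0 < δ₁ ∧
    (∀ α ∈ Ioo (αs - δ₁) (αs + δ₁),
      (ExtSet u α (Tk u (k - 1) αs + a)).Finite ∧
        (ExtSet u α (Tk u (k - 1) αs + a)).ncard = k ∧
        ∀ r ∈ ExtSet u α (Tk u (k - 1) αs + a),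
          (IsLocalMin (u α) r → u α r < -β) ∧ (IsLocalMax (u α) r → β < u α r)) ∧
    ∀ α₁ ∈ Ioo (αs - δ₁) (αs + δ₁), ∀ α₂ ∈ Ioo (αs - δ₁) (αs + δ₁), α₁ < α₂ →
      (∀ i : ℕ, 1 ≤ i → i ≤ k - 1 →
        ∃ t, max (Tk u (i - 1) α₁) (Tk u (i - 1) α₂) < t ∧
          t < min (Tk u i α₁) (Tk u i α₂) ∧ u α₁ t = u α₂ t) ∧
      ∃ t, Tk u (k - 1) αs < t ∧ (BddAbove (ZsetK u k αs) → t < Zk u k αs) ∧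
        u α₁ t = u α₂ t

/-- `ρ` is the inverse of the monotone branch of `v` on `[t₁, t₂]`, whose set of values
is `[m, M]`. -/
def InvBranch (v ρ : ℝ → ℝ) (t₁ t₂ m M : ℝ) : Prop :=
  (∀ s ∈ Icc m M, ρ s ∈ Icc t₁ t₂ ∧ v (ρ s) = s) ∧
    ∀ s ∈ Ioo m M, HasDerivAt ρ (1 / deriv v (ρ s)) s

/-- `ρ` inverts a decreasing branch of `v` over the value interval `[m, M]`, along which
`(v')² + 2F > 0`. -/
def DecBranchInv (f : ℝ → ℝ) (v ρ : ℝ → ℝ) (m M : ℝ) : Prop :=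
  ∀ s ∈ Icc m M, 0 ≤ ρ s ∧ v (ρ s) = s ∧ deriv v (ρ s) < 0 ∧
    HasDerivAt ρ (1 / deriv v (ρ s)) s ∧ 0 < (deriv v (ρ s)) ^ 2 + 2 * Fint f s

/-- The functional `Q(s) = -4 (F/f)(s) r/r' - r²/(r')² - 2 r² F(s) + H(s)` computed along
the branch inverse `ρ`. -/
def Qfun (f H ρ : ℝ → ℝ) (s : ℝ) : ℝ :=
  -4 * (Fint f s / f s) * (ρ s / deriv ρ s) - (ρ s) ^ 2 / (deriv ρ s) ^ 2 -
    2 * (ρ s) ^ 2 * Fint f s + H s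

/-- The functional `P(s) = -2n (F/f)(s) r^{n-1}/r' - r^n/(r')² - 2 r^n F(s)`. -/
def Pfun (n : ℕ) (f : ℝ → ℝ) (ρ : ℝ → ℝ) (s : ℝ) : ℝ :=
  -(2 * (n : ℝ)) * (Fint f s / f s) * (ρ s ^ (n - 1) / deriv ρ s) -
    ρ s ^ n / (deriv ρ s) ^ 2 - 2 * ρ s ^ n * Fint f s

/-- The functional `W(s) = r(s) √((u'(r(s)))² + 2 F(s))`. -/
def Wfun (f v ρ : ℝ → ℝ) (s : ℝ) : ℝ :=
  ρ s * Real.sqrt ((deriv v (ρ s)) ^ 2 + 2 * Fint f s)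

/-- The functional `W̃(s) = r(s)^{n-1} √((u'(r(s)))² + 2 F(s))`. -/
def Wtil (n : ℕ) (f : ℝ → ℝ) (v ρ : ℝ → ℝ) (s : ℝ) : ℝ :=
  ρ s ^ (n - 1) * Real.sqrt ((deriv v (ρ s)) ^ 2 + 2 * Fint f s)

/-- `v` changes sign at `z ∈ (0,∞)`: `v z = 0` and `v` takes both signs in every
neighborhood of `z` (within `(0,∞)`). -/
def SignChange (v : ℝ → ℝ) (z : ℝ) : Prop :=
  v z = 0 ∧ ∀ ε : ℝ, 0 < ε →
    (∃ x ∈ Ioo (z - ε) (z + ε) ∩ Ioi 0, 0 < v x) ∧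
    (∃ x ∈ Ioo (z - ε) (z + ε) ∩ Ioi 0, v x < 0)

/-- `v` has exactly `m` sign changes in `(0,∞)`. -/
def ExactSignChanges (v : ℝ → ℝ) (m : ℕ) : Prop :=
  {z | 0 < z ∧ SignChange v z}.Finite ∧ {z | 0 < z ∧ SignChange v z}.ncard = m

/-- Bound state: a C² solution of (E) on `(0,∞)` with `v' 0 = 0` and `v r → 0` as `r → ∞`. -/
def BoundState (n : ℕ) (f : ℝ → ℝ) (v : ℝ → ℝ) : Prop :=
  ContinuousOn v (Ici 0) ∧
    (∀ r : ℝ, 0 < r → DifferentiableAt ℝ v r ∧ DifferentiableAt ℝ (deriv v) r) ∧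
    (∀ r : ℝ, 0 < r → deriv (deriv v) r + ((n : ℝ) - 1) / r * deriv v r + f (v r) = 0) ∧
    deriv v 0 = 0 ∧ Tendsto v atTop (nhds 0)

/-- Solution of the Dirichlet problem on the ball of radius `R`. -/
def DirichletSol (n : ℕ) (f : ℝ → ℝ) (R : ℝ) (v : ℝ → ℝ) : Prop :=
  ContinuousOn v (Icc 0 R) ∧
    (∀ r ∈ Ioo (0:ℝ) R, DifferentiableAt ℝ v r ∧ DifferentiableAt ℝ (deriv v) r) ∧
    (∀ r ∈ Ioo (0:ℝ) R, deriv (deriv v) r + ((n : ℝ) - 1) / r * deriv v r + f (v r) = 0) ∧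
    deriv v 0 = 0 ∧ v R = 0

end
end Paper

open Paper Set Filter MeasureTheory

namespace Paper

section Calculus

variable {g g' : ℝ → ℝ} {a b : ℝ}

lemma le_of_hasDerivAt_nonneg (hab : a ≤ b) (hc : ContinuousOn g (Icc a b))
    (hd : ∀ x ∈ Ioo a b, HasDerivAt g (g' x) x) (h : ∀ x ∈ Ioo a b, 0 ≤ g' x) : g a ≤ g b := by
  have hm : MonotoneOn g (Icc a b) := by
    apply monotoneOn_of_deriv_nonneg (convex_Icc a b) hc
    · intro x hx
      rw [interior_Icc] at hx
      exact (hd x hx).differentiableAt.differentiableWithinAt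
    · intro x hx
      rw [interior_Icc] at hx
      rw [(hd x hx).deriv]
      exact h x hx
  exact hm (left_mem_Icc.2 hab) (right_mem_Icc.2 hab) hab

lemma lt_of_hasDerivAt_pos (hab : a < b) (hc : ContinuousOn g (Icc a b))
    (hd : ∀ x ∈ Ioo a b, HasDerivAt g (g' x) x) (h : ∀ x ∈ Ioo a b, 0 < g' x) : g a < g b := by
  have hm : StrictMonoOn g (Icc a b) := by
    apply strictMonoOn_of_deriv_pos (convex_Icc a b) hc
    intro x hx
    rw [interior_Icc] at hx
    rw [(hd x hx).deriv]
    exact h x hx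
  exact hm (left_mem_Icc.2 hab.le) (right_mem_Icc.2 hab.le) hab

lemma ge_of_hasDerivAt_nonpos (hab : a ≤ b) (hc : ContinuousOn g (Icc a b))
    (hd : ∀ x ∈ Ioo a b, HasDerivAt g (g' x) x) (h : ∀ x ∈ Ioo a b, g' x ≤ 0) : g b ≤ g a := by
  have := le_of_hasDerivAt_nonneg (g := fun x => -g x) (g' := fun x => -g' x) hab hc.neg
    (fun x hx => (hd x hx).neg) (fun x hx => neg_nonneg.2 (h x hx))
  simpa using this

lemma gt_of_hasDerivAt_neg (hab : a < b) (hc : ContinuousOn g (Icc a b))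
    (hd : ∀ x ∈ Ioo a b, HasDerivAt g (g' x) x) (h : ∀ x ∈ Ioo a b, g' x < 0) : g b < g a := by
  have := lt_of_hasDerivAt_pos (g := fun x => -g x) (g' := fun x => -g' x) hab hc.neg
    (fun x hx => (hd x hx).neg) (fun x hx => neg_pos.2 (h x hx))
  simpa using this

/-- One-sided Grönwall inequality: if `g' ≥ C g` and `g a ≥ 0` then `g b ≥ 0`. -/
lemma nonneg_of_mul_le_hasDerivAt {C : ℝ} (hab : a ≤ b) (hc : ContinuousOn g (Icc a b))
    (hd : ∀ x ∈ Ioo a b, HasDerivAt g (g' x) x) (h : ∀ x ∈ Ioo a b, C * g x ≤ g' x)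
    (ha : 0 ≤ g a) : 0 ≤ g b := by
  have hexp : ∀ x, HasDerivAt (fun x => Real.exp (-C * x)) (Real.exp (-C * x) * (-C)) x := by
    intro x
    have := ((hasDerivAt_id x).const_mul (-C)).exp
    simpa using this
  have := le_of_hasDerivAt_nonneg (g := fun x => Real.exp (-C * x) * g x) hab
    ((Continuous.continuousOn (by fun_prop)).mul hc)
    (fun x hx => (hexp x).mul (hd x hx))
    (fun x hx => by nlinarith [h x hx, Real.exp_pos (-C * x)])
  have h2 : 0 ≤ Real.exp (-C * b) * g b := le_trans (mul_nonneg (Real.exp_pos _).le ha) this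
  exact nonneg_of_mul_nonneg_right h2 (Real.exp_pos _)

/-- Backward Grönwall inequality: if `-C g ≤ g'` and `g b ≤ 0` then `g a ≤ 0`. -/
lemma nonpos_of_neg_mul_le_hasDerivAt {C : ℝ} (hab : a ≤ b) (hc : ContinuousOn g (Icc a b))
    (hd : ∀ x ∈ Ioo a b, HasDerivAt g (g' x) x) (h : ∀ x ∈ Ioo a b, -C * g x ≤ g' x)
    (hb : g b ≤ 0) : g a ≤ 0 := by
  by_contra hcon
  push Not at hcon
  have hexp : ∀ x, HasDerivAt (fun x => Real.exp (C * x)) (Real.exp (C * x) * C) x := by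
    intro x
    have := ((hasDerivAt_id x).const_mul C).exp
    simpa using this
  have := le_of_hasDerivAt_nonneg (g := fun x => Real.exp (C * x) * g x) hab
    ((Continuous.continuousOn (by fun_prop)).mul hc)
    (fun x hx => (hexp x).mul (hd x hx))
    (fun x hx => by nlinarith [h x hx, Real.exp_pos (C * x)])
  have h2 : 0 < Real.exp (C * b) * g b := lt_of_lt_of_le (mul_pos (Real.exp_pos _) hcon) this
  exact absurd (pos_of_mul_pos_right h2 (Real.exp_pos _).le) (not_lt.2 hb)

end Calculus

section Nonlinearity

variable {f : ℝ → ℝ} {b β : ℝ}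

lemma hasDerivAt_Fint (hf : Continuous f) (s : ℝ) : HasDerivAt (Fint f) (f s) s :=
  (hf.integral_hasStrictDerivAt 0 s).hasDerivAt

lemma continuous_Fint (hf : Continuous f) : Continuous (Fint f) :=
  continuous_iff_continuousAt.2 fun s => (hasDerivAt_Fint hf s).continuousAt

lemma Fint_zero : Fint f 0 = 0 := by simp [Fint]

lemma Fint_neg (h1 : Hf1 f b β) (s : ℝ) : Fint f (-s) = Fint f s := by
  have h := intervalIntegral.integral_comp_neg (a := 0) (b := s) f
  simp only [h1.1, neg_zero, intervalIntegral.integral_neg] at h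
  rw [Fint, Fint, intervalIntegral.integral_symm, ← h, neg_neg]

lemma Fint_nonpos_of_mem_Icc_zero (hf : Continuous f) (h1 : Hf1 f b β) {s : ℝ} (h0 : 0 ≤ s)
    (hs : s ≤ β) : Fint f s ≤ 0 := by
  obtain ⟨-, -, hb, hbβ, hpos, hneg, -, hβ⟩ := h1
  rcases le_total s b with h | h
  · have := ge_of_hasDerivAt_nonpos h0 (continuous_Fint hf).continuousOn
      (fun x _ => hasDerivAt_Fint hf x) (fun x hx => hneg x ⟨hx.1.le, hx.2.le.trans h⟩)
    rwa [Fint_zero] at this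
  · have := le_of_hasDerivAt_nonneg hs (continuous_Fint hf).continuousOn
      (fun x _ => hasDerivAt_Fint hf x) (fun x hx => (hpos x (h.trans_lt hx.1)).le)
    rwa [hβ] at this

lemma Fint_nonpos (hf : Continuous f) (h1 : Hf1 f b β) {s : ℝ} (hs : s ∈ Icc (-β) β) :
    Fint f s ≤ 0 := by
  rcases le_total 0 s with h | h
  · exact Fint_nonpos_of_mem_Icc_zero hf h1 h hs.2
  · rw [← Fint_neg h1]
    exact Fint_nonpos_of_mem_Icc_zero hf h1 (by linarith) (by linarith [hs.1])

lemma Fint_pos_of_lt (hf : Continuous f) (h1 : Hf1 f b β) {s : ℝ} (hs : β < s) :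
    0 < Fint f s := by
  obtain ⟨-, -, hb, hbβ, hpos, hneg, -, hβ⟩ := h1
  have := lt_of_hasDerivAt_pos hs (continuous_Fint hf).continuousOn
      (fun x _ => hasDerivAt_Fint hf x) (fun x hx => (hpos x (hbβ.trans hx.1)))
  rwa [hβ] at this

lemma Fint_pos_of_lt_neg (hf : Continuous f) (h1 : Hf1 f b β) {s : ℝ} (hs : s < -β) :
    0 < Fint f s := by
  rw [← Fint_neg h1]
  exact Fint_pos_of_lt hf h1 (by linarith)

lemma mem_Icc_of_Fint_nonpos (hf : Continuous f) (h1 : Hf1 f b β) {s : ℝ} (hs : Fint f s ≤ 0) :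
    s ∈ Icc (-β) β := by
  constructor
  · by_contra h
    exact absurd (Fint_pos_of_lt_neg hf h1 (not_le.1 h)) (not_lt.2 hs)
  · by_contra h
    exact absurd (Fint_pos_of_lt hf h1 (not_le.1 h)) (not_lt.2 hs)

lemma neg_of_lt_neg (h1 : Hf1 f b β) {s : ℝ} (hs : s < -b) : f s < 0 := by
  have := h1.2.2.2.2.1 (-s) (by linarith)
  rw [h1.1] at this
  linarith

lemma nonneg_of_mem_Icc_neg (h1 : Hf1 f b β) {s : ℝ} (hs : s ∈ Icc (-b) 0) : 0 ≤ f s := by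
  have := h1.2.2.2.2.2.1 (-s) ⟨by linarith [hs.2], by linarith [hs.1]⟩
  rw [h1.1] at this
  linarith

lemma differentiableAt_of_ne_zero (h1 : Hf1 f b β) (h2 : Hf2 f) {s : ℝ} (hs : s ≠ 0) :
    DifferentiableAt ℝ f s := by
  rcases lt_or_gt_of_ne hs with h | h
  · have h3 : DifferentiableAt ℝ (fun x => -f (-x)) s :=
      (((h2.2.1 (-s) (by linarith)).comp s differentiableAt_id.neg)).neg
    have h4 : (fun x => -f (-x)) = f := by
      funext x
      rw [h1.1, neg_neg]
    rwa [h4] at h3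
  · exact h2.2.1 s h

/-- Under (f1), (f2) the quotient `F/f` has the expected derivative outside `[-b, b]`. -/
lemma hasDerivAt_Fint_div (hf : Continuous f) (h1 : Hf1 f b β) (h2 : Hf2 f) {s : ℝ}
    (hs : s ≠ 0) (hfs : f s ≠ 0) :
    HasDerivAt (fun t => Fint f t / f t) (deriv (fun t => Fint f t / f t) s) s :=
  ((hasDerivAt_Fint hf s).differentiableAt.div (differentiableAt_of_ne_zero h1 h2 hs)
    hfs).hasDerivAt

lemma deriv_Fint_div_neg (h1 : Hf1 f b β) (s : ℝ) :
    deriv (fun t => Fint f t / f t) (-s) = deriv (fun t => Fint f t / f t) s := by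
  have h : (fun t => Fint f t / f t) = fun t => -(fun t => Fint f t / f t) (-t) := by
    funext t
    simp only [Fint_neg h1, h1.1]
    rw [div_neg, neg_neg]
  conv_rhs => rw [h]
  rw [deriv.fun_neg, deriv_comp_neg (fun t => Fint f t / f t), neg_neg]

/-- (f5) and (f6) imply (f4). -/
lemma Hf4_of_Hf5_Hf6 (hf : Continuous f) (h1 : Hf1 f b β) (h2 : Hf2 f) {n : ℕ} (hn : 2 < n)
    (h5 : Hf5 f β) (h6 : Hf6 n f β) : Hf4 n f β := by
  intro s hs
  have hb : 0 < b := h1.2.2.1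
  have hbβ : b < β := h1.2.2.2.1
  have hpos := h1.2.2.2.2.1
  have hs0 : 0 < s := by linarith
  have hfs : 0 < f s := hpos s (by linarith)
  have hn' : (2:ℝ) < n := by exact_mod_cast hn
  have hder := (hasDerivAt_Fint hf s).div (h2.2.1 s hs0).hasDerivAt hfs.ne'
  have e1 : deriv (fun t => Fint f t / f t) s =
    (f s * f s - Fint f s * deriv f s) / f s ^ 2 := hder.deriv
  rw [e1]
  set q : ℝ := s * deriv f s / f s with hq
  have hqle : q ≤ (n:ℝ) / ((n:ℝ) - 2) :=
    (h5 (self_mem_Ici) (mem_Ici.2 hs.le) hs.le).trans h6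
  have hF0 : 0 < Fint f s := Fint_pos_of_lt hf h1 hs
  have hmono : β * f β - (1 + q) * Fint f β ≤ s * f s - (1 + q) * Fint f s := by
    refine le_of_hasDerivAt_nonneg (g := fun t => t * f t - (1 + q) * Fint f t)
      (g' := fun t => (1 * f t + t * deriv f t) - (1 + q) * f t) hs.le ?_ ?_ ?_
    · exact ((continuous_id.mul hf).sub ((continuous_Fint hf).const_mul _)).continuousOn
    · intro t ht
      have ht0 : 0 < t := by linarith [ht.1]
      exact ((hasDerivAt_id t).mul (h2.2.1 t ht0).hasDerivAt).sub
        ((hasDerivAt_Fint hf t).const_mul _)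
    · intro t ht
      have hft : 0 < f t := hpos t (by linarith [ht.1])
      have h7 : q ≤ t * deriv f t / f t := h5 (mem_Ici.2 ht.1.le) (mem_Ici.2 hs.le) ht.2.le
      rw [le_div_iff₀ hft] at h7
      linarith
  rw [h1.2.2.2.2.2.2.2] at hmono
  have hβf : 0 < β * f β := mul_pos (by linarith) (hpos β hbβ)
  have hqf : s * deriv f s = q * f s := by rw [hq]; field_simp
  rw [div_le_div_iff₀ (by positivity) (by positivity)]
  have hq2 : q * ((n:ℝ) - 2) ≤ n := by rwa [le_div_iff₀ (by linarith)] at hqle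
  have key : 2 * (n:ℝ) * (Fint f s * deriv f s) ≤ ((n:ℝ) + 2) * f s ^ 2 := by
    rcases le_or_gt q 0 with hq0 | hq0
    · have : deriv f s ≤ 0 := by
        by_contra hcon
        push Not at hcon
        nlinarith [mul_pos hs0 hcon]
      have h8 : Fint f s * deriv f s ≤ 0 := mul_nonpos_of_nonneg_of_nonpos hF0.le this
      have h9 : 0 ≤ ((n:ℝ) + 2) * f s ^ 2 := by positivity
      nlinarith
    · have h8 : (1 + q) * Fint f s ≤ s * f s := by linarith
      have h9 : s * (1 + q) * (Fint f s * deriv f s) ≤ s * q * f s ^ 2 := by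
        calc s * (1 + q) * (Fint f s * deriv f s)
            = ((1 + q) * Fint f s) * (s * deriv f s) := by ring
          _ = ((1 + q) * Fint f s) * (q * f s) := by rw [hqf]
          _ ≤ (s * f s) * (q * f s) := by gcongr
          _ = s * q * f s ^ 2 := by ring
      have h10 : (1 + q) * (Fint f s * deriv f s) ≤ q * f s ^ 2 := by
        have : s * ((1 + q) * (Fint f s * deriv f s)) ≤ s * (q * f s ^ 2) := by linarith
        exact le_of_mul_le_mul_left this hs0
      have h11 : 2 * (n:ℝ) * q ≤ ((n:ℝ) + 2) * (1 + q) := by nlinarith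
      have h12 : (1 + q) * (2 * (n:ℝ) * (Fint f s * deriv f s)) ≤
          (1 + q) * (((n:ℝ) + 2) * f s ^ 2) := by
        nlinarith [sq_nonneg (f s), mul_le_mul_of_nonneg_right h11 (sq_nonneg (f s))]
      exact le_of_mul_le_mul_left h12 (by linarith)
  nlinarith

end Nonlinearity

/-- A solution of the initial value problem, in terms of `HasDerivAt`, with continuous
derivative up to the origin. -/
structure RadialSol (n : ℕ) (f : ℝ → ℝ) (α : ℝ) (v : ℝ → ℝ) : Prop where
  zero : v 0 = α
  deriv_zero : deriv v 0 = 0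
  cont : ContinuousOn v (Ici 0)
  cont_deriv : ContinuousOn (deriv v) (Ici 0)
  hasDerivAt : ∀ r, 0 < r → HasDerivAt v (deriv v r) r
  hasDerivAt_deriv : ∀ r, 0 < r →
    HasDerivAt (deriv v) (-(((n : ℝ) - 1) / r * deriv v r) - f (v r)) r

lemma Family.radialSol {n : ℕ} {f : ℝ → ℝ} {u : ℝ → ℝ → ℝ} (hu : Family n f u) {α : ℝ}
    (hα : 0 < α) : RadialSol n f α (u α) := by
  obtain ⟨h1, h2, h3, h4, h5⟩ := hu.1 α hα
  refine ⟨h1, h2, h3, ?_, fun r hr => (h4 r hr).1.hasDerivAt, fun r hr => ?_⟩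
  · exact hu.2.2.comp (f := fun r : ℝ => (α, r)) (by fun_prop) (fun r hr => ⟨hα, hr⟩)
  · have h6 := (h4 r hr).2.hasDerivAt
    have h7 := h5 r hr
    exact h6.congr_deriv (by linarith)

namespace RadialSol

variable {n : ℕ} {f : ℝ → ℝ} {α : ℝ} {v : ℝ → ℝ} {b β : ℝ}

lemma contOn (h : RadialSol n f α v) {c d : ℝ} (hc : 0 ≤ c) : ContinuousOn v (Icc c d) :=
  h.cont.mono fun _ hx => hc.trans hx.1

lemma contOn_deriv (h : RadialSol n f α v) {c d : ℝ} (hc : 0 ≤ c) :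
    ContinuousOn (deriv v) (Icc c d) :=
  h.cont_deriv.mono fun _ hx => hc.trans hx.1

/-- The energy `(v')² + 2 F(v)`. -/
lemma energy_hasDerivAt (hf : Continuous f) (h : RadialSol n f α v) {r : ℝ} (hr : 0 < r) :
    HasDerivAt (fun r => deriv v r ^ 2 + 2 * Fint f (v r))
      (-(2 * (((n : ℝ) - 1) / r) * deriv v r ^ 2)) r := by
  have h1 := ((h.hasDerivAt_deriv r hr).pow 2).add
    (((hasDerivAt_Fint hf (v r)).comp r (h.hasDerivAt r hr)).const_mul 2)
  refine h1.congr_deriv ?_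
  simp only [Nat.cast_ofNat, Nat.add_one_sub_one, pow_one]
  ring

lemma energy_contOn (hf : Continuous f) (h : RadialSol n f α v) :
    ContinuousOn (fun r => deriv v r ^ 2 + 2 * Fint f (v r)) (Ici 0) :=
  (h.cont_deriv.pow 2).add
    (continuousOn_const.mul ((continuous_Fint hf).comp_continuousOn h.cont))

lemma energy_anti (hn : 1 ≤ n) (hf : Continuous f) (h : RadialSol n f α v) {c d : ℝ}
    (hc : 0 ≤ c) (hcd : c ≤ d) :
    deriv v d ^ 2 + 2 * Fint f (v d) ≤ deriv v c ^ 2 + 2 * Fint f (v c) := by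
  have hn' : (1:ℝ) ≤ n := by exact_mod_cast hn
  refine ge_of_hasDerivAt_nonpos hcd ((h.energy_contOn hf).mono fun x hx => hc.trans hx.1)
    (fun x hx => h.energy_hasDerivAt hf (hc.trans_lt hx.1)) fun x hx => ?_
  have hx0 : 0 < x := hc.trans_lt hx.1
  have : 0 ≤ ((n : ℝ) - 1) / x := div_nonneg (by linarith) hx0.le
  have := mul_nonneg this (sq_nonneg (deriv v x))
  linarith

/-- If the energy takes the same value at two points then `v' = 0` in between. -/
lemma deriv_eq_zero_of_energy_le (hn : 2 ≤ n) (hf : Continuous f) (h : RadialSol n f α v)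
    {c d : ℝ} (hc : 0 ≤ c)
    (he : deriv v c ^ 2 + 2 * Fint f (v c) ≤ deriv v d ^ 2 + 2 * Fint f (v d)) :
    ∀ r ∈ Ioo c d, deriv v r = 0 := by
  intro r hr
  have hr0 : 0 < r := hc.trans_lt hr.1
  have hev : (fun r => deriv v r ^ 2 + 2 * Fint f (v r)) =ᶠ[nhds r]
      fun _ => deriv v d ^ 2 + 2 * Fint f (v d) := by
    filter_upwards [Ioo_mem_nhds hr.1 hr.2] with x hx
    have h1 := h.energy_anti (by omega) hf hc hx.1.le
    have h2 := h.energy_anti (by omega) hf (hc.trans hx.1.le) hx.2.le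
    linarith
  have h3 := (h.energy_hasDerivAt hf hr0).unique
    ((hasDerivAt_const r _).congr_of_eventuallyEq hev)
  have hn' : (2:ℝ) ≤ n := by exact_mod_cast hn
  have h4 : 0 < 2 * (((n : ℝ) - 1) / r) := by
    have : 0 < ((n : ℝ) - 1) / r := div_pos (by linarith) hr0
    linarith
  have h5 : deriv v r ^ 2 = 0 := by
    rcases mul_eq_zero.1 (neg_eq_zero.1 h3) with h6 | h6
    · exact absurd h6 h4.ne'
    · exact h6
  exact pow_eq_zero_iff (two_ne_zero) |>.1 h5

/-- Uniqueness at an equilibrium: if `v' = 0` and `f(v) = 0` at `r₀ > 0`, and `f` is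
differentiable at `v r₀`, then `v' = 0` to the left of `r₀`. -/
lemma exists_deriv_eq_zero_left (hn : 1 ≤ n) (h : RadialSol n f α v) {r₀ : ℝ} (hr₀ : 0 < r₀)
    (hd : deriv v r₀ = 0) (hfv : f (v r₀) = 0) (hdf : DifferentiableAt ℝ f (v r₀)) :
    ∃ ε > 0, ε < r₀ ∧ ∀ r ∈ Ioo (r₀ - ε) r₀, deriv v r = 0 := by
  have hn' : (1:ℝ) ≤ n := by exact_mod_cast hn
  obtain ⟨L, hL⟩ := hdf.hasDerivAt.isBigO_sub.bound
  have hcont : ContinuousAt v r₀ := (h.hasDerivAt r₀ hr₀).continuousAt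
  have hev : ∀ᶠ r in nhds r₀, |f (v r)| ≤ L * |v r - v r₀| := by
    filter_upwards [hcont.eventually hL] with r hr
    simpa [hfv] using hr
  obtain ⟨ε₁, hε₁, hball⟩ := Metric.eventually_nhds_iff.1 hev
  set ε := min (ε₁ / 2) (r₀ / 2) with hε
  have hε0 : 0 < ε := by positivity
  have hεr : ε ≤ r₀ / 2 := min_le_right _ _
  have hεε : ε ≤ ε₁ / 2 := min_le_left _ _
  refine ⟨ε, hε0, by linarith, fun r hr => ?_⟩
  have hr0 : 0 < r := by linarith [hr.1]
  set C : ℝ := 2 * (((n:ℝ) - 1) / (r₀ / 2)) + |L| + 1 with hC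
  have key : deriv v r ^ 2 + (v r - v r₀) ^ 2 ≤ 0 := by
    refine nonpos_of_neg_mul_le_hasDerivAt (C := C)
      (g := fun x => deriv v x ^ 2 + (v x - v r₀) ^ 2)
      (g' := fun x => 2 * deriv v x * (-(((n : ℝ) - 1) / x * deriv v x) - f (v x)) +
        2 * (v x - v r₀) * deriv v x) hr.2.le ?_ ?_ ?_ ?_
    · exact ((h.contOn_deriv hr0.le).pow 2).add (((h.contOn hr0.le).sub continuousOn_const).pow 2)
    · intro x hx
      have hx0 : 0 < x := hr0.trans hx.1
      have h1 := ((h.hasDerivAt_deriv x hx0).pow 2).add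
        (((h.hasDerivAt x hx0).sub_const (v r₀)).pow 2)
      refine h1.congr_deriv ?_
      simp only [Nat.cast_ofNat, Nat.add_one_sub_one, pow_one]
    · intro x hx
      have hx0 : 0 < x := hr0.trans hx.1
      have hxr : r₀ / 2 ≤ x := by linarith [hr.1, hx.1]
      have hdist : dist x r₀ < ε₁ := by
        rw [Real.dist_eq, abs_lt]
        constructor <;> linarith [hr.1, hx.1, hx.2]
      have hfx := hball hdist
      have h1 : ((n:ℝ) - 1) / x ≤ ((n:ℝ) - 1) / (r₀ / 2) :=
        div_le_div_of_nonneg_left (by linarith) (by linarith) hxr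
      have h2 : |f (v x)| ≤ |L| * |v x - v r₀| :=
        hfx.trans (mul_le_mul_of_nonneg_right (le_abs_self L) (abs_nonneg _))
      set p := deriv v x
      set w := v x - v r₀
      have h3 : |p * f (v x)| ≤ |L| * (|p| * |w|) := by
        rw [abs_mul]
        nlinarith [abs_nonneg p]
      have h4 : 2 * (|p| * |w|) ≤ p ^ 2 + w ^ 2 := by
        nlinarith [sq_nonneg (|p| - |w|), sq_abs p, sq_abs w]
      have h5 : 2 * |p * w| ≤ p ^ 2 + w ^ 2 := by rwa [abs_mul]
      have h6 := mul_le_mul_of_nonneg_right h1 (sq_nonneg p)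
      have h7 := mul_le_mul_of_nonneg_left h4 (abs_nonneg L)
      have h8 : 0 ≤ ((n:ℝ) - 1) / (r₀ / 2) * w ^ 2 :=
        mul_nonneg (div_nonneg (by linarith) (by linarith)) (sq_nonneg w)
      have h9 := le_abs_self (p * f (v x))
      have h10 := neg_abs_le (p * w)
      rw [hC]
      nlinarith
    · simp [hd]
  have h1 : deriv v r ^ 2 = 0 := by nlinarith [sq_nonneg (deriv v r), sq_nonneg (v r - v r₀)]
  exact pow_eq_zero_iff (two_ne_zero) |>.1 h1

lemma isLocalMin (h : RadialSol n f α v) {r : ℝ} (hr : 0 < r) (hd : deriv v r = 0)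
    (hf : f (v r) < 0) : IsLocalMin v r := by
  refine isLocalMin_of_deriv_deriv_pos ?_ hd (h.hasDerivAt r hr).continuousAt
  rw [(h.hasDerivAt_deriv r hr).deriv, hd]
  simpa using hf

lemma isLocalMax (h : RadialSol n f α v) {r : ℝ} (hr : 0 < r) (hd : deriv v r = 0)
    (hf : 0 < f (v r)) : IsLocalMax v r := by
  refine isLocalMax_of_deriv_deriv_neg ?_ hd (h.hasDerivAt r hr).continuousAt
  rw [(h.hasDerivAt_deriv r hr).deriv, hd]
  simpa using hf

/-- The critical points of `v` in `[0, A]` are finitely many, at least two, and the local minimum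
(maximum) values are below `-β` (above `β`). -/
def ManyExtrema (β A : ℝ) (v : ℝ → ℝ) : Prop :=
  {r | r ∈ Icc 0 A ∧ deriv v r = 0}.Finite ∧ 1 < {r | r ∈ Icc 0 A ∧ deriv v r = 0}.ncard ∧
    ∀ r ∈ {r | r ∈ Icc 0 A ∧ deriv v r = 0},
      (IsLocalMin v r → v r < -β) ∧ (IsLocalMax v r → β < v r)

lemma ManyExtrema.exists_pos {A : ℝ} (hx : ManyExtrema β A v) :
    ∃ r, 0 < r ∧ r ≤ A ∧ deriv v r = 0 := by
  have := hx.1.to_subtype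
  obtain ⟨r, hr, hr0⟩ := (one_lt_ncard_iff_nontrivial.1 hx.2.1).exists_ne 0
  exact ⟨r, lt_of_le_of_ne hr.1.1 (Ne.symm hr0), hr.1.2, hr.2⟩

lemma ManyExtrema.not_zero_on_Ioo {A : ℝ} (hx : ManyExtrema β A v) {c d : ℝ} (hc : 0 ≤ c)
    (hcd : c < d) (hd : d ≤ A) : ¬ ∀ r ∈ Ioo c d, deriv v r = 0 := by
  intro h
  exact (Ioo_infinite hcd) (hx.1.subset fun r hr => ⟨⟨hc.trans hr.1.le, hr.2.le.trans hd⟩, h r hr⟩)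

/-- Enough large extrema force the initial value above `β`. -/
lemma lt_of_manyExtrema (hn : 2 ≤ n) (hf : Continuous f) (h1 : Hf1 f b β) (h2 : Hf2 f)
    (hα : 0 < α) (h : RadialSol n f α v) {A : ℝ} (hx : ManyExtrema β A v) : β < α := by
  by_contra hcon
  push Not at hcon
  obtain ⟨r₀, hr₀, hrA, hd⟩ := hx.exists_pos
  have hF0 : Fint f α ≤ 0 := Fint_nonpos_of_mem_Icc_zero hf h1 hα.le hcon
  have he := h.energy_anti (by omega) hf le_rfl hr₀.le
  rw [hd, h.deriv_zero, h.zero] at he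
  have hmem : v r₀ ∈ Icc (-β) β := mem_Icc_of_Fint_nonpos hf h1 (by linarith)
  have hext := hx.2.2 r₀ ⟨⟨hr₀.le, hrA⟩, hd⟩
  rcases lt_trichotomy (f (v r₀)) 0 with hlt | heq | hgt
  · linarith [hext.1 (h.isLocalMin hr₀ hd hlt), hmem.1]
  · rcases eq_or_ne (v r₀) 0 with hv | hv
    · refine hx.not_zero_on_Ioo le_rfl hr₀ hrA
        (h.deriv_eq_zero_of_energy_le hn hf le_rfl ?_)
      rw [hd, h.deriv_zero, h.zero, hv, Fint_zero]
      linarith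
    · obtain ⟨ε, hε, hεr, hz⟩ := h.exists_deriv_eq_zero_left (by omega) hr₀ hd heq
        (differentiableAt_of_ne_zero h1 h2 hv)
      exact hx.not_zero_on_Ioo (by linarith) (by linarith) hrA hz
  · linarith [hext.2 (h.isLocalMax hr₀ hd hgt), hmem.2]

/-- The flux `r^{n-1} v'`. -/
lemma flux_hasDerivAt (hn : 1 ≤ n) (h : RadialSol n f α v) {r : ℝ} (hr : 0 < r) :
    HasDerivAt (fun r => r ^ (n - 1) * deriv v r) (-(r ^ (n - 1) * f (v r))) r := by
  obtain ⟨j, rfl⟩ : ∃ j, n = j + 1 := ⟨n - 1, by omega⟩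
  simp only [Nat.add_sub_cancel]
  have h1 := (hasDerivAt_pow j r).mul (h.hasDerivAt_deriv r hr)
  refine h1.congr_deriv ?_
  rcases j with _ | j
  · simp
  · simp only [Nat.add_sub_cancel]
    push_cast
    field_simp
    ring

lemma flux_contOn (h : RadialSol n f α v) :
    ContinuousOn (fun r => r ^ (n - 1) * deriv v r) (Ici 0) :=
  (Continuous.continuousOn (by fun_prop)).mul h.cont_deriv

lemma exists_deriv_neg_right (hn : 2 ≤ n) (hf : Continuous f) (h1 : Hf1 f b β)
    (h : RadialSol n f α v) (hα : β < α) : ∃ ε > 0, ∀ r ∈ Ioc 0 ε, deriv v r < 0 := by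
  have hfα : 0 < f (v 0) := by
    rw [h.zero]
    exact h1.2.2.2.2.1 α (h1.2.2.2.1.trans hα)
  have hev : ∀ᶠ r in nhdsWithin 0 (Ici 0), 0 < f (v r) :=
    ((hf.comp_continuousOn h.cont) 0 self_mem_Ici).eventually (lt_mem_nhds hfα)
  obtain ⟨ε, hε, hsub⟩ := mem_nhdsGE_iff_exists_Icc_subset.1 hev
  refine ⟨ε, hε, fun r hr => ?_⟩
  have := gt_of_hasDerivAt_neg hr.1 (h.flux_contOn.mono fun x hx => hx.1)
    (fun x hx => h.flux_hasDerivAt (by omega) hx.1)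
    (fun x hx => neg_neg_of_pos (mul_pos (pow_pos hx.1 _)
      (hsub ⟨hx.1.le, hx.2.le.trans hr.2⟩)))
  rw [h.deriv_zero, mul_zero] at this
  exact neg_of_mul_neg_right this (pow_nonneg hr.1.le _)

/-- The first positive critical point. -/
lemma exists_first_critical (hn : 2 ≤ n) (hf : Continuous f) (h1 : Hf1 f b β)
    (h : RadialSol n f α v) (hα : β < α) {A : ℝ} (hx : ManyExtrema β A v) :
    ∃ T, 0 < T ∧ T ≤ A ∧ deriv v T = 0 ∧ ∀ r ∈ Ioo 0 T, deriv v r < 0 := by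
  obtain ⟨ε, hε, hneg⟩ := h.exists_deriv_neg_right hn hf h1 hα
  obtain ⟨r₀, hr₀, hrA, hd⟩ := hx.exists_pos
  have hεr : ε < r₀ := by
    by_contra hcon
    exact absurd hd (hneg r₀ ⟨hr₀, not_lt.1 hcon⟩).ne
  have hcl : IsCompact (Icc ε A ∩ deriv v ⁻¹' {0}) :=
    isCompact_Icc.of_isClosed_subset
      ((h.contOn_deriv hε.le).preimage_isClosed_of_isClosed isClosed_Icc isClosed_singleton)
      inter_subset_left
  obtain ⟨T, hT, hmin⟩ := hcl.exists_isLeast ⟨r₀, ⟨hεr.le, hrA⟩, hd⟩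
  have hεT : ε ≤ T := hT.1.1
  refine ⟨T, hε.trans_le hεT, hT.1.2, hT.2, fun r hr => ?_⟩
  rcases le_or_gt r ε with hle | hgt
  · exact hneg r ⟨hr.1, hle⟩
  · by_contra hcon
    push Not at hcon
    have hivt := intermediate_value_Icc hgt.le (h.contOn_deriv (d := r) hε.le)
    obtain ⟨x, hx1, hx2⟩ := hivt ⟨(hneg ε ⟨hε, le_rfl⟩).le, hcon⟩
    have := hmin ⟨⟨hx1.1, hx1.2.trans (hr.2.le.trans hT.1.2)⟩, hx2⟩
    linarith [hx1.2, hr.2]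

lemma strictAntiOn (h : RadialSol n f α v) {T : ℝ} (hneg : ∀ r ∈ Ioo 0 T, deriv v r < 0) :
    StrictAntiOn v (Icc 0 T) := by
  intro x hx y hy hxy
  exact gt_of_hasDerivAt_neg hxy (h.contOn hx.1) (fun z hz => h.hasDerivAt z (hx.1.trans_lt hz.1))
    fun z hz => hneg z ⟨hx.1.trans_lt hz.1, hz.2.trans_le hy.2⟩

/-- A first critical value other than `0` is a local minimum value. -/
lemma lt_neg_of_first_critical (hn : 2 ≤ n) (h1 : Hf1 f b β) (h2 : Hf2 f)
    (h : RadialSol n f α v) {A T : ℝ} (hx : ManyExtrema β A v) (hT : 0 < T) (hTA : T ≤ A)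
    (hd : deriv v T = 0) (hneg : ∀ r ∈ Ioo 0 T, deriv v r < 0) (hv : v T ≠ 0) : v T < -β := by
  rcases lt_trichotomy (f (v T)) 0 with hlt | heq | hgt
  · exact (hx.2.2 T ⟨⟨hT.le, hTA⟩, hd⟩).1 (h.isLocalMin hT hd hlt)
  · obtain ⟨ε, hε, hεr, hz⟩ := h.exists_deriv_eq_zero_left (by omega) hT hd heq
      (differentiableAt_of_ne_zero h1 h2 hv)
    exact absurd (hz (T - ε / 2) ⟨by linarith, by linarith⟩)
      (hneg _ ⟨by linarith, by linarith⟩).ne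
  · have hmax := h.isLocalMax hT hd hgt
    have hev : ∀ᶠ r in nhdsWithin T (Iio T), r ∈ Ioo 0 T := Ioo_mem_nhdsLT hT
    obtain ⟨r, hr1, hr2⟩ := (hev.and (hmax.filter_mono nhdsWithin_le_nhds)).exists
    exact absurd (h.strictAntiOn hneg ⟨hr1.1.le, hr1.2.le⟩ ⟨hT.le, le_rfl⟩ hr1.2) (not_lt.2 hr2)

end RadialSol

/-- `[0, T]` is the first decreasing branch of the solution `v`, from `α > β` down to a minimum
value below `-β`. -/
structure FirstBranch (n : ℕ) (f : ℝ → ℝ) (β α : ℝ) (v : ℝ → ℝ) (T : ℝ) : Prop where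
  sol : RadialSol n f α v
  lt_init : β < α
  pos : 0 < T
  deriv_neg : ∀ r ∈ Ioo 0 T, deriv v r < 0
  deriv_end : deriv v T = 0
  min_lt : v T < -β

lemma ZsetAux_one_eq {n : ℕ} {f : ℝ → ℝ} {u : ℝ → ℝ → ℝ} {α T z : ℝ}
    (h : RadialSol n f α (u α)) (hneg : ∀ r ∈ Ioo 0 T, deriv (u α) r < 0) (hz : 0 < z)
    (hzT : z ≤ T) (hvz : u α z = 0) : ZsetAux u 1 0 α = Ioc 0 z := by
  ext r
  simp only [ZsetAux, mem_ofPred_eq, pow_one, mem_Ioc]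
  refine and_congr_right fun hr => ⟨fun H => ?_, fun hrz s hs => ?_⟩
  · by_contra hcon
    have := (H z ⟨hz, not_le.1 hcon⟩).1
    simp [hvz] at this
  · have hsz : s < z := hs.2.trans_le hrz
    have h1 := h.strictAntiOn hneg ⟨hs.1.le, hsz.le.trans hzT⟩ ⟨hz.le, hzT⟩ hsz
    have h2 := hneg s ⟨hs.1, hsz.trans_le hzT⟩
    constructor <;> linarith

lemma Tk_one_eq {n : ℕ} {f : ℝ → ℝ} {u : ℝ → ℝ → ℝ} {α T z : ℝ}
    (h : RadialSol n f α (u α)) (hneg : ∀ r ∈ Ioo 0 T, deriv (u α) r < 0) (hz : 0 < z)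
    (hzT : z ≤ T) (hvz : u α z = 0) :
    Tk u 1 α = sInf {r | z < r ∧ deriv (u α) r = 0} := by
  have : Tk u 1 α = sInf {r | sSup (ZsetAux u 1 0 α) < r ∧ deriv (u α) r = 0} := rfl
  rw [this, ZsetAux_one_eq h hneg hz hzT hvz, csSup_Ioc hz]

/-- A solution reaching `0` with zero slope cannot do so on its first branch, if the branch ends
at a positive `T₁` and admits a differentiable inverse. -/
lemma first_critical_ne_zero {n : ℕ} {f : ℝ → ℝ} {b β : ℝ} {u : ℝ → ℝ → ℝ} {α A T : ℝ}
    {ρ : ℝ → ℝ} (hn : 2 ≤ n) (hf : Continuous f) (h1 : Hf1 f b β)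
    (h : RadialSol n f α (u α)) (hα : β < α) (hx : RadialSol.ManyExtrema β A (u α))
    (hT0 : 0 < T) (hTA : T ≤ A) (hd : deriv (u α) T = 0)
    (hneg : ∀ r ∈ Ioo 0 T, deriv (u α) r < 0) (hT1 : 0 < Tk u 1 α)
    (hρ : InvBranch (u α) ρ 0 (Tk u 1 α) (u α (Tk u 1 α)) α) : u α T ≠ 0 := by
  intro hv
  have hb : 0 < b := h1.2.2.1
  have hβ : 0 < β := hb.trans h1.2.2.2.1
  have hTk := Tk_one_eq h hneg hT0 le_rfl hv
  rw [hTk] at hT1 hρ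
  set v := u α with hvdef
  set S := {r | T < r ∧ deriv v r = 0} with hS
  have hSne : S.Nonempty := by
    by_contra hcon
    rw [not_nonempty_iff_eq_empty.1 hcon, Real.sInf_empty] at hT1
    exact lt_irrefl _ hT1
  have hSbdd : BddBelow S := ⟨T, fun r hr => hr.1.le⟩
  have hTS : T ≤ sInf S := le_csInf hSne fun r hr => hr.1.le
  have hanti := h.strictAntiOn hneg
  have hposl : ∀ r ∈ Ico 0 T, 0 < v r := fun r hr => by
    have := hanti ⟨hr.1, hr.2.le⟩ ⟨hT0.le, le_rfl⟩ hr.2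
    rwa [hv] at this
  have hnotmin : ¬ IsLocalMin v T := fun hm => by
    have := (hx.2.2 T ⟨⟨hT0.le, hTA⟩, hd⟩).1 hm
    rw [hv] at this
    linarith
  have hconst : ∀ r, T < r → (∀ x ∈ Ioo T r, deriv v x = 0) → 0 ≤ v r := fun r hr hz => by
    have := le_of_hasDerivAt_nonneg hr.le (h.contOn hT0.le)
      (fun x hx => h.hasDerivAt x (hT0.trans hx.1)) fun x hx => (hz x hx).ge
    rwa [hv] at this
  have hnear : ∀ ε > 0, ∃ r ∈ Ioo T (T + ε), v r < 0 := by
    intro ε hε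
    by_contra hcon
    push Not at hcon
    refine hnotmin ?_
    filter_upwards [Ioo_mem_nhds hT0 (by linarith : T < T + ε)] with r hr
    rw [hv]
    rcases lt_trichotomy r T with hlt | heq | hgt
    · exact (hposl r ⟨hr.1.le, hlt⟩).le
    · rw [heq, hv]
    · exact hcon r ⟨hgt, hr.2⟩
  have hright : ∀ r, T < r → v r < 0 := by
    intro r hr
    by_contra hcon
    push Not at hcon
    obtain ⟨r1, hr1, hvr1⟩ := hnear (r - T) (by linarith)
    have hr1r : r1 < r := by linarith [hr1.2]
    obtain ⟨r2, hr2, hvr2⟩ := intermediate_value_Icc hr1r.le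
      (h.contOn (hT0.trans hr1.1).le) ⟨hvr1.le, hcon⟩
    have hz := h.deriv_eq_zero_of_energy_le hn hf hT0.le (c := T) (d := r2) (by
      rw [hd, hv, hvr2]
      nlinarith [sq_nonneg (deriv v r2)])
    have := hconst r1 hr1.1 fun x hx => hz x ⟨hx.1, hx.2.trans_le hr2.1⟩
    linarith
  rcases hTS.eq_or_lt with heq | hlt
  · have hcw : ContinuousWithinAt v (Ici T) T :=
      (h.hasDerivAt T hT0).continuousAt.continuousWithinAt
    have hev : ∀ᶠ r in nhdsWithin T (Ici T), -b < v r :=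
      hcw.eventually (lt_mem_nhds (by rw [hv]; linarith))
    obtain ⟨c, hc, hsub⟩ := mem_nhdsGE_iff_exists_Icc_subset.1 hev
    obtain ⟨r0, hr0S, hr0c⟩ := exists_lt_of_csInf_lt hSne (heq ▸ hc : sInf S < c)
    have hder : ∀ x ∈ Ioo T r0, -(x ^ (n - 1) * f (v x)) ≤ 0 := fun x hx =>
      neg_nonpos.2 (mul_nonneg (pow_nonneg (hT0.trans hx.1).le _) (nonneg_of_mem_Icc_neg h1
        ⟨(hsub ⟨hx.1.le, (hx.2.trans hr0c).le⟩ : -b < v x).le, (hright x hx.1).le⟩))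
    have hflux : ∀ x ∈ Ioo T r0, deriv v x = 0 := by
      intro x hx
      have h3 := ge_of_hasDerivAt_nonpos hx.1.le
        (h.flux_contOn.mono fun y hy => hT0.le.trans hy.1)
        (fun y hy => h.flux_hasDerivAt (by omega) (hT0.trans hy.1))
        fun y hy => hder y ⟨hy.1, hy.2.trans hx.2⟩
      have h4 := ge_of_hasDerivAt_nonpos hx.2.le
        (h.flux_contOn.mono fun y hy => (hT0.trans hx.1).le.trans hy.1)
        (fun y hy => h.flux_hasDerivAt (by omega) ((hT0.trans hx.1).trans hy.1))
        fun y hy => hder y ⟨hx.1.trans hy.1, hy.2⟩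
      simp only [hd, hr0S.2, mul_zero] at h3 h4
      have h5 : x ^ (n - 1) * deriv v x = 0 := le_antisymm h3 h4
      exact (mul_eq_zero.1 h5).resolve_left (pow_pos (hT0.trans hx.1) _).ne'
    linarith [hconst r0 hr0S.1 hflux, hright r0 hr0S.1]
  · have hm : v (sInf S) < 0 := hright _ hlt
    have h0 : (0:ℝ) ∈ Ioo (v (sInf S)) α := ⟨hm, hβ.trans hα⟩
    have hρ0 := hρ.1 0 ⟨h0.1.le, h0.2.le⟩
    have hρT : ρ 0 = T := by
      rcases lt_trichotomy (ρ 0) T with h3 | h3 | h3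
      · linarith [hposl _ ⟨hρ0.1.1, h3⟩, hρ0.2]
      · exact h3
      · linarith [hright _ h3, hρ0.2]
    have h3 := hρ.2 0 h0
    have h4 := h.hasDerivAt (ρ 0) (by rwa [hρT])
    have h5 := h4.comp 0 h3
    rw [hρT, hd, zero_mul] at h5
    have h6 : (v ∘ ρ) =ᶠ[nhds 0] id := by
      filter_upwards [Ioo_mem_nhds h0.1 h0.2] with s hs
      exact (hρ.1 s ⟨hs.1.le, hs.2.le⟩).2
    exact zero_ne_one (h5.unique ((hasDerivAt_id 0).congr_of_eventuallyEq h6))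

lemma firstBranch_Tk_one {n : ℕ} {f : ℝ → ℝ} {b β : ℝ} {u : ℝ → ℝ → ℝ} {α A : ℝ}
    {ρ : ℝ → ℝ} (hn : 2 ≤ n) (hf : Continuous f) (h1 : Hf1 f b β) (h2 : Hf2 f)
    (h : RadialSol n f α (u α)) (hα : β < α) (hx : RadialSol.ManyExtrema β A (u α))
    (hT1 : 0 < Tk u 1 α) (hρ : InvBranch (u α) ρ 0 (Tk u 1 α) (u α (Tk u 1 α)) α) :
    FirstBranch n f β α (u α) (Tk u 1 α) := by
  obtain ⟨T, hT0, hTA, hd, hneg⟩ := h.exists_first_critical hn hf h1 hα hx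
  have hne := first_critical_ne_zero hn hf h1 h hα hx hT0 hTA hd hneg hT1 hρ
  have hlt := h.lt_neg_of_first_critical hn h1 h2 hx hT0 hTA hd hneg hne
  have hβ : 0 < β := h1.2.2.1.trans h1.2.2.2.1
  obtain ⟨z, hz, hvz⟩ := intermediate_value_Ioo' hT0.le (h.contOn le_rfl)
    (show (0:ℝ) ∈ Ioo (u α T) (u α 0) from ⟨by linarith, by rw [h.zero]; linarith⟩)
  have hTk : Tk u 1 α = T := by
    rw [Tk_one_eq h hneg hz.1 hz.2.le hvz]
    refine IsLeast.csInf_eq ⟨⟨hz.2, hd⟩, fun r hr => ?_⟩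
    by_contra hcon
    exact absurd hr.2 (hneg r ⟨hz.1.trans hr.1, not_le.1 hcon⟩).ne
  rw [hTk]
  exact ⟨h, hα, hT0, hneg, hd, hlt⟩

lemma pos_of_mem_Nk {u : ℝ → ℝ → ℝ} {α : ℝ} : ∀ k, α ∈ Nk u k → 0 < α
  | 0, h => h
  | 1, h => h.1
  | k + 2, h => pos_of_mem_Nk (k + 1) h.1

lemma pos_of_mem_Gk {u : ℝ → ℝ → ℝ} {α : ℝ} : ∀ k, α ∈ Gk u k → 0 < α
  | 0, h => h.elim
  | 1, h => h.1
  | k + 2, h => pos_of_mem_Nk (k + 1) h.1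

lemma DeltaOneLemma.manyExtrema {f : ℝ → ℝ} {β αs a δ₁ : ℝ} {u : ℝ → ℝ → ℝ} {k : ℕ}
    (hk : 2 ≤ k) (h : DeltaOneLemma f β u k αs a δ₁) {α : ℝ}
    (hα : α ∈ Ioo (αs - δ₁) (αs + δ₁)) :
    RadialSol.ManyExtrema β (Tk u (k - 1) αs + a) (u α) := by
  obtain ⟨h1, h2, h3⟩ := h.2.2.1 α hα
  refine ⟨h1, ?_, h3⟩
  have : 1 < (ExtSet u α (Tk u (k - 1) αs + a)).ncard := by omega
  exact this

lemma DeltaOneLemma.lt_init {n : ℕ} {f : ℝ → ℝ} {b β αs a δ₁ : ℝ} {u : ℝ → ℝ → ℝ} {k : ℕ}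
    (hn : 2 ≤ n) (hf : Continuous f) (h1 : Hf1 f b β) (h2 : Hf2 f) (hu : Family n f u)
    (hk : 2 ≤ k) (hαs : 0 < αs) (h : DeltaOneLemma f β u k αs a δ₁) {α : ℝ}
    (hα : α ∈ Ioo (αs - δ₁) (αs + δ₁)) : β < α := by
  have key : ∀ α' ∈ Ioo (αs - δ₁) (αs + δ₁), 0 < α' → β < α' := fun α' hα' h0 =>
    (hu.radialSol h0).lt_of_manyExtrema hn hf h1 h2 h0 (h.manyExtrema hk hα')
  have hβ : 0 < β := h1.2.2.1.trans h1.2.2.2.1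
  have hδ := h.2.1
  rcases lt_or_ge 0 α with h0 | h0
  · exact key α hα h0
  · have hm : 0 < min β αs := lt_min hβ hαs
    have h3 := key (min β αs) ⟨by linarith [hα.1], by linarith [min_le_right β αs]⟩ hm
    linarith [min_le_left β αs]

lemma DeltaOneLemma.exists_crossing {f : ℝ → ℝ} {β αs a δ₁ : ℝ} {u : ℝ → ℝ → ℝ} {k : ℕ}
    (hk : 2 ≤ k) (h : DeltaOneLemma f β u k αs a δ₁) {α₁ α₂ : ℝ}
    (hα₁ : α₁ ∈ Ioo (αs - δ₁) (αs + δ₁)) (hα₂ : α₂ ∈ Ioo (αs - δ₁) (αs + δ₁))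
    (h12 : α₁ < α₂) :
    ∃ t, 0 < t ∧ t < Tk u 1 α₁ ∧ t < Tk u 1 α₂ ∧ u α₁ t = u α₂ t := by
  obtain ⟨t, ht1, ht2, ht3⟩ := (h.2.2.2 α₁ hα₁ α₂ hα₂ h12).1 1 le_rfl (by omega)
  have h0 : ∀ α, Tk u (1 - 1) α = 0 := fun _ => rfl
  rw [h0, h0, max_self] at ht1
  exact ⟨t, ht1, (lt_min_iff.1 ht2).1, (lt_min_iff.1 ht2).2, ht3⟩

/-- The first decreasing branch in the variable `s = u`: `r` is the radius and `p = -u'`. -/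
structure SBranch (n : ℕ) (f : ℝ → ℝ) (m α : ℝ) (r p : ℝ → ℝ) : Prop where
  lt : m < α
  cont_r : ContinuousOn r (Icc m α)
  cont_p : ContinuousOn p (Icc m α)
  r_init : r α = 0
  r_pos : ∀ s ∈ Ico m α, 0 < r s
  p_min : p m = 0
  p_pos : ∀ s ∈ Ioo m α, 0 < p s
  energy : ∀ s ∈ Icc m α, 0 ≤ p s ^ 2 + 2 * Fint f s
  deriv_r : ∀ s ∈ Ioo m α, HasDerivAt r (-(1 / p s)) s
  deriv_p : ∀ s ∈ Ioo m α, HasDerivAt p (((n : ℝ) - 1) / r s - f s / p s) s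

namespace FirstBranch

variable {n : ℕ} {f : ℝ → ℝ} {b β α T : ℝ} {v ρ : ℝ → ℝ}

lemma anti (h : FirstBranch n f β α v T) : StrictAntiOn v (Icc 0 T) :=
  h.sol.strictAntiOn h.deriv_neg

lemma mem_Icc (h : FirstBranch n f β α v T) {r : ℝ} (hr : r ∈ Icc 0 T) : v r ∈ Icc (v T) α := by
  refine ⟨h.anti.antitoneOn hr ⟨h.pos.le, le_rfl⟩ hr.2, ?_⟩
  rw [← h.sol.zero]
  exact h.anti.antitoneOn ⟨le_rfl, h.pos.le⟩ hr hr.1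

lemma inv_apply (h : FirstBranch n f β α v T) (hρ : InvBranch v ρ 0 T (v T) α) {r : ℝ}
    (hr : r ∈ Icc 0 T) : ρ (v r) = r :=
  h.anti.injOn (hρ.1 _ (h.mem_Icc hr)).1 hr (hρ.1 _ (h.mem_Icc hr)).2

lemma inv_continuousOn (h : FirstBranch n f β α v T) (hρ : InvBranch v ρ 0 T (v T) α) :
    ContinuousOn ρ (Icc (v T) α) := by
  rw [continuousOn_iff_isClosed]
  intro t ht
  refine ⟨v '' (Icc 0 T ∩ t), ((isCompact_Icc.inter_right ht).image_of_continuousOn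
    ((h.sol.contOn le_rfl).mono inter_subset_left)).isClosed, ?_⟩
  ext s
  constructor
  · rintro ⟨hs1, hs2⟩
    exact ⟨⟨ρ s, ⟨(hρ.1 s hs2).1, hs1⟩, (hρ.1 s hs2).2⟩, hs2⟩
  · rintro ⟨⟨r, hr, rfl⟩, hs2⟩
    refine ⟨?_, hs2⟩
    rw [mem_preimage, h.inv_apply hρ hr.1]
    exact hr.2

lemma inv_mem_Ioo (h : FirstBranch n f β α v T) (hρ : InvBranch v ρ 0 T (v T) α) {s : ℝ}
    (hs : s ∈ Ioo (v T) α) : ρ s ∈ Ioo 0 T := by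
  obtain ⟨h1, h2⟩ := hρ.1 s ⟨hs.1.le, hs.2.le⟩
  refine ⟨lt_of_le_of_ne h1.1 fun h0 => ?_, lt_of_le_of_ne h1.2 fun h0 => ?_⟩
  · rw [← h0, h.sol.zero] at h2
    exact hs.2.ne h2.symm
  · rw [h0] at h2
    exact hs.1.ne h2

lemma sBranch (hn : 2 ≤ n) (hf : Continuous f) (h1 : Hf1 f b β) (h : FirstBranch n f β α v T)
    (hρ : InvBranch v ρ 0 T (v T) α) :
    SBranch n f (v T) α ρ (fun s => -deriv v (ρ s)) := by
  have hβ : 0 < β := h1.2.2.1.trans h1.2.2.2.1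
  have hmin : ρ (v T) = T := h.inv_apply hρ ⟨h.pos.le, le_rfl⟩
  have hcont := h.inv_continuousOn hρ
  refine ⟨by linarith [h.min_lt, h.lt_init], hcont, ?_, ?_, ?_, ?_, ?_, ?_, ?_, ?_⟩
  · exact (h.sol.cont_deriv.comp hcont fun s hs => (hρ.1 s hs).1.1).neg
  · have := h.inv_apply hρ ⟨le_rfl, h.pos.le⟩
    rwa [h.sol.zero] at this
  · intro s hs
    rcases hs.1.eq_or_lt with h0 | h0
    · rw [← h0, hmin]
      exact h.pos
    · exact (h.inv_mem_Ioo hρ ⟨h0, hs.2⟩).1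
  · simp [hmin, h.deriv_end]
  · intro s hs
    exact neg_pos.2 (h.deriv_neg _ (h.inv_mem_Ioo hρ hs))
  · intro s hs
    obtain ⟨h3, h4⟩ := hρ.1 s hs
    have h5 := h.sol.energy_anti (by omega) hf h3.1 h3.2
    rw [h.deriv_end, h4] at h5
    have := Fint_pos_of_lt_neg hf h1 h.min_lt
    simp only [neg_sq]
    linarith
  · intro s hs
    exact (hρ.2 s hs).congr_deriv (by rw [div_neg, neg_neg])
  · intro s hs
    have h3 := h.inv_mem_Ioo hρ hs
    have h4 := ((h.sol.hasDerivAt_deriv _ h3.1).comp s (hρ.2 s hs)).neg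
    refine h4.congr_deriv ?_
    rw [(hρ.1 s ⟨hs.1.le, hs.2.le⟩).2]
    have h5 := (h.deriv_neg _ h3).ne
    field_simp
    ring

/-- The inverse is not differentiable at the minimum value, where the slope is infinite. -/
lemma deriv_inv_min (h1 : Hf1 f b β) (h : FirstBranch n f β α v T)
    (hρ : InvBranch v ρ 0 T (v T) α) :
    deriv ρ (v T) = 0 := by
  refine deriv_zero_of_not_differentiableAt fun hd => ?_
  have hβ : 0 < β := h1.2.2.1.trans h1.2.2.2.1
  have hlt : v T < α := by linarith [h.min_lt, h.lt_init]
  have hmin : ρ (v T) = T := h.inv_apply hρ ⟨h.pos.le, le_rfl⟩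
  have h3 := h.sol.hasDerivAt (ρ (v T)) (by rw [hmin]; exact h.pos)
  have h4 := (h3.comp (v T) hd.hasDerivAt).hasDerivWithinAt (s := Icc (v T) α)
  rw [hmin, h.deriv_end, zero_mul] at h4
  have h5 := (hasDerivWithinAt_id (v T) (Icc (v T) α)).congr
    (f₁ := v ∘ ρ) (fun s hs => (hρ.1 s hs).2) (hρ.1 _ ⟨le_rfl, hlt.le⟩).2
  exact zero_ne_one ((uniqueDiffOn_Icc hlt _ ⟨le_rfl, hlt.le⟩).eq_deriv _ h4 h5)

end FirstBranch

/-- Comparison of two decreasing branches from the right endpoint `d`, driven by an auxiliary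
quantity `D` whose positivity keeps `p₁ < p₂`. -/
lemma branch_comparison {r₁ r₂ p₁ p₂ D D' : ℝ → ℝ} {c d : ℝ}
    (cr₁ : ContinuousOn r₁ (Icc c d)) (cr₂ : ContinuousOn r₂ (Icc c d))
    (cp₁ : ContinuousOn p₁ (Icc c d)) (cp₂ : ContinuousOn p₂ (Icc c d))
    (cD : ContinuousOn D (Icc c d))
    (dr₁ : ∀ s ∈ Ioo c d, HasDerivAt r₁ (-(1 / p₁ s)) s)
    (dr₂ : ∀ s ∈ Ioo c d, HasDerivAt r₂ (-(1 / p₂ s)) s)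
    (hp : ∀ s ∈ Ioo c d, 0 < p₁ s)
    (dD : ∀ s ∈ Ioo c d, HasDerivAt D (D' s) s)
    (h0 : r₂ d ≤ r₁ d) (hD0 : 0 < D d)
    (himp : ∀ s ∈ Icc c d, r₂ s ≤ r₁ s → 0 < D s → p₁ s < p₂ s)
    (hD' : ∀ s ∈ Ioo c d, r₂ s ≤ r₁ s → p₁ s < p₂ s → D' s ≤ 0) :
    ∀ s ∈ Icc c d, r₂ s ≤ r₁ s ∧ p₁ s < p₂ s ∧ D d ≤ D s := by
  have hr : ∀ s ∈ Icc c d, (∀ x ∈ Ioo s d, p₁ x < p₂ x) → r₂ s ≤ r₁ s := by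
    intro s hs hlt
    have := ge_of_hasDerivAt_nonpos (g := fun x => r₁ x - r₂ x)
      (g' := fun x => -(1 / p₁ x) - -(1 / p₂ x)) hs.2
      ((cr₁.sub cr₂).mono (Icc_subset_Icc_left hs.1))
      (fun x hx => (dr₁ x ⟨hs.1.trans_lt hx.1, hx.2⟩).sub (dr₂ x ⟨hs.1.trans_lt hx.1, hx.2⟩))
      (fun x hx => by
        have := one_div_le_one_div_of_le (hp x ⟨hs.1.trans_lt hx.1, hx.2⟩) (hlt x hx).le
        linarith)
    linarith
  have hDs : ∀ s ∈ Icc c d, (∀ x ∈ Ioo s d, p₁ x < p₂ x) → D d ≤ D s := by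
    intro s hs hlt
    refine ge_of_hasDerivAt_nonpos hs.2 (cD.mono (Icc_subset_Icc_left hs.1))
      (fun x hx => dD x ⟨hs.1.trans_lt hx.1, hx.2⟩) fun x hx => ?_
    have hx' : x ∈ Ioo c d := ⟨hs.1.trans_lt hx.1, hx.2⟩
    exact hD' x hx' (hr x ⟨hx'.1.le, hx'.2.le⟩ fun y hy => hlt y ⟨hx.1.trans hy.1, hy.2⟩)
      (hlt x hx)
  have key : ∀ s ∈ Icc c d, p₁ s < p₂ s := by
    by_contra hcon
    push Not at hcon
    obtain ⟨e₀, he₀, hle₀⟩ := hcon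
    have hcl : IsCompact (Icc c d ∩ (fun x => p₁ x - p₂ x) ⁻¹' Ici 0) :=
      isCompact_Icc.of_isClosed_subset
        ((cp₁.sub cp₂).preimage_isClosed_of_isClosed isClosed_Icc isClosed_Ici) inter_subset_left
    obtain ⟨e, he, hmax⟩ := hcl.exists_isGreatest ⟨e₀, he₀, by simpa using hle₀⟩
    have hlt : ∀ x ∈ Ioo e d, p₁ x < p₂ x := by
      intro x hx
      by_contra hxc
      have := hmax ⟨⟨he.1.1.trans hx.1.le, hx.2.le⟩, by simpa using hxc⟩
      exact absurd this (not_le.2 hx.1)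
    have h3 := himp e he.1 (hr e he.1 hlt) (hD0.trans_le (hDs e he.1 hlt))
    have h4 : 0 ≤ p₁ e - p₂ e := he.2
    linarith
  intro s hs
  have hlt : ∀ x ∈ Ioo s d, p₁ x < p₂ x := fun x hx => key x ⟨hs.1.trans hx.1.le, hx.2.le⟩
  exact ⟨hr s hs hlt, key s hs, hDs s hs hlt⟩

/-- The functional `P` in terms of the radius `r` and `p = -u'`. -/
noncomputable def Pcoord (n : ℕ) (f r p : ℝ → ℝ) (s : ℝ) : ℝ :=
  2 * (n : ℝ) * (Fint f s / f s) * (r s ^ (n - 1) * p s) - r s ^ n * p s ^ 2 -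
    2 * r s ^ n * Fint f s

namespace SBranch

variable {n : ℕ} {f : ℝ → ℝ} {b β m α : ℝ} {r p : ℝ → ℝ}

lemma p_nonneg (h : SBranch n f m α r p) {s : ℝ} (hs : s ∈ Ico m α) : 0 ≤ p s := by
  rcases hs.1.eq_or_lt with h0 | h0
  · rw [← h0, h.p_min]
  · exact (h.p_pos s ⟨h0, hs.2⟩).le

lemma pow_hasDerivAt (h : SBranch n f m α r p) {s : ℝ} (hs : s ∈ Ioo m α) (i : ℕ) :
    HasDerivAt (fun s => r s ^ (i + 1)) (-(((i : ℝ) + 1) * r s ^ i / p s)) s := by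
  refine ((h.deriv_r s hs).pow (i + 1)).congr_deriv ?_
  simp only [Nat.add_sub_cancel]
  push_cast
  ring

lemma flux_hasDerivAt (hn : 2 ≤ n) (h : SBranch n f m α r p) {s : ℝ} (hs : s ∈ Ioo m α) :
    HasDerivAt (fun s => r s ^ (n - 1) * p s) (-(r s ^ (n - 1) * f s / p s)) s := by
  obtain ⟨i, rfl⟩ : ∃ i, n = i + 2 := ⟨n - 2, by omega⟩
  simp only [show i + 2 - 1 = i + 1 by omega]
  refine ((h.pow_hasDerivAt hs i).mul (h.deriv_p s hs)).congr_deriv ?_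
  have h1 := (h.p_pos s hs).ne'
  have h2 := (h.r_pos s ⟨hs.1.le, hs.2⟩).ne'
  push_cast
  field_simp
  ring

lemma flux_sq_hasDerivAt (hn : 2 ≤ n) (h : SBranch n f m α r p) {s : ℝ} (hs : s ∈ Ioo m α) :
    HasDerivAt (fun s => (r s ^ (n - 1) * p s) ^ 2) (-(2 * (r s ^ (n - 1)) ^ 2 * f s)) s := by
  refine ((h.flux_hasDerivAt hn hs).pow 2).congr_deriv ?_
  have h1 := (h.p_pos s hs).ne'
  simp only [Nat.cast_ofNat, Nat.add_one_sub_one, pow_one]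
  field_simp

lemma weighted_energy_hasDerivAt (hn : 2 ≤ n) (hf : Continuous f) (h : SBranch n f m α r p)
    {s : ℝ} (hs : s ∈ Ioo m α) :
    HasDerivAt (fun s => (r s ^ (n - 1)) ^ 2 * (p s ^ 2 + 2 * Fint f s))
      (-(4 * ((n : ℝ) - 1) * Fint f s) * (r s ^ (n - 1) * r s ^ (n - 2) / p s)) s := by
  obtain ⟨i, rfl⟩ : ∃ i, n = i + 2 := ⟨n - 2, by omega⟩
  simp only [show i + 2 - 1 = i + 1 by omega, Nat.add_sub_cancel]
  refine (((h.pow_hasDerivAt hs i).pow 2).mul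
    (((h.deriv_p s hs).pow 2).add ((hasDerivAt_Fint hf s).const_mul 2))).congr_deriv ?_
  have h1 := (h.p_pos s hs).ne'
  have h2 := (h.r_pos s ⟨hs.1.le, hs.2⟩).ne'
  simp only [Nat.cast_ofNat, Nat.add_one_sub_one, pow_one, Pi.add_apply, Pi.pow_apply]
  push_cast
  field_simp
  ring

lemma Pcoord_hasDerivAt (hn : 2 ≤ n) (hf : Continuous f) (h1 : Hf1 f b β) (h2 : Hf2 f)
    (h : SBranch n f m α r p) {s : ℝ} (hs : s ∈ Ioo m α) (hs0 : s ≠ 0) (hfs : f s ≠ 0) :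
    HasDerivAt (Pcoord n f r p) (r s ^ (n - 1) * p s *
      (2 * (n : ℝ) * deriv (fun t => Fint f t / f t) s - ((n : ℝ) - 2))) s := by
  have hq := (hasDerivAt_Fint_div hf h1 h2 hs0 hfs).differentiableAt.hasDerivAt
  obtain ⟨i, rfl⟩ : ∃ i, n = i + 2 := ⟨n - 2, by omega⟩
  have hy := h.flux_hasDerivAt hn hs
  have hrn := h.pow_hasDerivAt hs (i + 1)
  refine ((((hq.const_mul (2 * ((i + 2 : ℕ) : ℝ))).mul hy).sub
    (hrn.mul ((h.deriv_p s hs).pow 2))).sub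
    ((hrn.const_mul 2).mul (hasDerivAt_Fint hf s))).congr_deriv ?_
  have h1 := (h.p_pos s hs).ne'
  have h2 := (h.r_pos s ⟨hs.1.le, hs.2⟩).ne'
  simp only [Nat.cast_ofNat, Nat.add_one_sub_one, pow_one, Pi.pow_apply,
    show i + 2 - 1 = i + 1 by omega]
  push_cast
  field_simp
  ring

lemma Pcoord_continuousOn (hf : Continuous f) (h1 : Hf1 f b β) (h : SBranch n f m α r p)
    {c d : ℝ} (hc : m ≤ c) (hd : d ≤ α) (hdb : d < -b) :
    ContinuousOn (Pcoord n f r p) (Icc c d) := by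
  have hr := h.cont_r.mono (Icc_subset_Icc hc hd)
  have hp := h.cont_p.mono (Icc_subset_Icc hc hd)
  have hF := (continuous_Fint hf).continuousOn (s := Icc c d)
  have hne : ∀ s ∈ Icc c d, f s ≠ 0 := fun s hs => (neg_of_lt_neg h1 (hs.2.trans_lt hdb)).ne
  have hq := hF.div hf.continuousOn hne
  unfold Pcoord
  fun_prop

end SBranch

/-- Behaviour of the two branches between `-β` and the minimum values. -/
lemma lower_comparison {n : ℕ} {f : ℝ → ℝ} {b β : ℝ} (hn : 2 ≤ n) (hf : Continuous f)
    (h1 : Hf1 f b β) (h2 : Hf2 f) (h4 : Hf4 n f β) {m₁ m₂ α₁ α₂ s₀ : ℝ} {r₁ r₂ p₁ p₂ : ℝ → ℝ}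
    (H₁ : SBranch n f m₁ α₁ r₁ p₁) (H₂ : SBranch n f m₂ α₂ r₂ p₂) (hs₀ : s₀ ≤ -β)
    (hm₁ : m₁ < s₀) (hm₂ : m₂ < s₀) (hα₁ : s₀ < α₁) (hα₂ : s₀ < α₂) (hr : r₂ s₀ ≤ r₁ s₀)
    (hy : r₁ s₀ ^ (n - 1) * p₁ s₀ < r₂ s₀ ^ (n - 1) * p₂ s₀)
    (hP : Pcoord n f r₂ p₂ s₀ < Pcoord n f r₁ p₁ s₀) :
    m₂ < m₁ ∧ Pcoord n f r₂ p₂ m₂ < Pcoord n f r₁ p₁ m₁ := by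
  have hb : 0 < b := h1.2.2.1
  have hβ : b < β := h1.2.2.2.1
  have hcmp : ∀ c, m₁ ≤ c → m₂ ≤ c → c < s₀ → ∀ s ∈ Icc c s₀, r₂ s ≤ r₁ s ∧ p₁ s < p₂ s ∧
      (r₂ s₀ ^ (n - 1) * p₂ s₀) ^ 2 - (r₁ s₀ ^ (n - 1) * p₁ s₀) ^ 2 ≤
      (r₂ s ^ (n - 1) * p₂ s) ^ 2 - (r₁ s ^ (n - 1) * p₁ s) ^ 2 := by
    intro c hc₁ hc₂ hcs
    have i₁ : ∀ s ∈ Icc c s₀, s ∈ Ico m₁ α₁ := fun s hs =>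
      ⟨hc₁.trans hs.1, hs.2.trans_lt hα₁⟩
    have i₂ : ∀ s ∈ Icc c s₀, s ∈ Ico m₂ α₂ := fun s hs =>
      ⟨hc₂.trans hs.1, hs.2.trans_lt hα₂⟩
    have j₁ : ∀ s ∈ Ioo c s₀, s ∈ Ioo m₁ α₁ := fun s hs =>
      ⟨hc₁.trans_lt hs.1, hs.2.trans hα₁⟩
    have j₂ : ∀ s ∈ Ioo c s₀, s ∈ Ioo m₂ α₂ := fun s hs =>
      ⟨hc₂.trans_lt hs.1, hs.2.trans hα₂⟩
    have cr₁ := H₁.cont_r.mono (Icc_subset_Icc hc₁ hα₁.le)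
    have cr₂ := H₂.cont_r.mono (Icc_subset_Icc hc₂ hα₂.le)
    have cp₁ := H₁.cont_p.mono (Icc_subset_Icc hc₁ hα₁.le)
    have cp₂ := H₂.cont_p.mono (Icc_subset_Icc hc₂ hα₂.le)
    refine branch_comparison
      (D := fun s => (r₂ s ^ (n - 1) * p₂ s) ^ 2 - (r₁ s ^ (n - 1) * p₁ s) ^ 2)
      cr₁ cr₂ cp₁ cp₂ (by fun_prop) (fun s hs => H₁.deriv_r s (j₁ s hs))
      (fun s hs => H₂.deriv_r s (j₂ s hs)) (fun s hs => H₁.p_pos s (j₁ s hs))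
      (fun s hs => (H₂.flux_sq_hasDerivAt hn (j₂ s hs)).sub (H₁.flux_sq_hasDerivAt hn (j₁ s hs)))
      hr ?_ ?_ ?_
    · have h0 := mul_nonneg (pow_nonneg (H₁.r_pos s₀ ⟨hm₁.le, hα₁⟩).le (n - 1))
        (H₁.p_nonneg ⟨hm₁.le, hα₁⟩)
      exact sub_pos.2 (pow_lt_pow_left₀ hy h0 two_ne_zero)
    · intro s hs hrs hD
      have hq : r₂ s ^ (n - 1) ≤ r₁ s ^ (n - 1) :=
        pow_le_pow_left₀ (H₂.r_pos s (i₂ s hs)).le hrs _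
      have hq2 : 0 < r₂ s ^ (n - 1) := pow_pos (H₂.r_pos s (i₂ s hs)) _
      have hp1 := H₁.p_nonneg (i₁ s hs)
      have hp2 := H₂.p_nonneg (i₂ s hs)
      have hlt := lt_of_pow_lt_pow_left₀ 2 (mul_nonneg hq2.le hp2) (sub_pos.1 hD)
      by_contra hcon
      exact absurd hlt (not_lt.2 (mul_le_mul hq (not_lt.1 hcon) hp2 (hq2.le.trans hq)))
    · intro s hs hrs _
      have hs' : s ∈ Icc c s₀ := ⟨hs.1.le, hs.2.le⟩
      have hq : r₂ s ^ (n - 1) ≤ r₁ s ^ (n - 1) :=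
        pow_le_pow_left₀ (H₂.r_pos s (i₂ s hs')).le hrs _
      have hq2 : 0 < r₂ s ^ (n - 1) := pow_pos (H₂.r_pos s (i₂ s hs')) _
      have hfs : f s < 0 := neg_of_lt_neg h1 (by linarith [hs.2])
      have := pow_le_pow_left₀ hq2.le hq 2
      nlinarith
  have hmm : m₂ < m₁ := by
    by_contra hcon
    have h3 := (hcmp m₂ (not_lt.1 hcon) le_rfl hm₂ m₂ ⟨le_rfl, hm₂.le⟩).2.1
    rw [H₂.p_min] at h3
    have := H₁.p_nonneg (s := m₂) ⟨not_lt.1 hcon, hm₂.trans hα₁⟩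
    linarith
  have hg : ∀ s, s < -β →
      0 ≤ 2 * (n : ℝ) * deriv (fun t => Fint f t / f t) s - ((n : ℝ) - 2) := by
    intro s hs
    have h3 := h4 (-s) (by linarith)
    rw [deriv_Fint_div_neg h1 s, div_le_iff₀ (by positivity)] at h3
    linarith
  have hne : ∀ s, s < -β → s ≠ 0 ∧ f s ≠ 0 := fun s hs =>
    ⟨by linarith, (neg_of_lt_neg h1 (by linarith)).ne⟩
  refine ⟨hmm, ?_⟩
  have hmono : Pcoord n f r₂ p₂ m₂ ≤ Pcoord n f r₂ p₂ m₁ := by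
    refine le_of_hasDerivAt_nonneg hmm.le
      (H₂.Pcoord_continuousOn hf h1 le_rfl (hm₁.trans hα₂).le (by linarith))
      (fun s hs => H₂.Pcoord_hasDerivAt hn hf h1 h2 ⟨hs.1, hs.2.trans (hm₁.trans hα₂)⟩
        (hne s (by linarith [hs.2])).1 (hne s (by linarith [hs.2])).2) fun s hs => ?_
    have hs' : s ∈ Ioo m₂ α₂ := ⟨hs.1, hs.2.trans (hm₁.trans hα₂)⟩
    exact mul_nonneg (mul_nonneg (pow_nonneg (H₂.r_pos s ⟨hs'.1.le, hs'.2⟩).le _)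
      (H₂.p_pos s hs').le) (hg s (by linarith [hs.2]))
  have hdiff := ge_of_hasDerivAt_nonpos
    (g := fun s => Pcoord n f r₁ p₁ s - Pcoord n f r₂ p₂ s) hm₁.le
    ((H₁.Pcoord_continuousOn hf h1 le_rfl hα₁.le (by linarith)).sub
      (H₂.Pcoord_continuousOn hf h1 hmm.le hα₂.le (by linarith)))
    (fun s hs => (H₁.Pcoord_hasDerivAt hn hf h1 h2 ⟨hs.1, hs.2.trans hα₁⟩
        (hne s (by linarith [hs.2])).1 (hne s (by linarith [hs.2])).2).sub
      (H₂.Pcoord_hasDerivAt hn hf h1 h2 ⟨hmm.trans hs.1, hs.2.trans hα₂⟩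
        (hne s (by linarith [hs.2])).1 (hne s (by linarith [hs.2])).2)) fun s hs => by
      obtain ⟨h5, h6, h7⟩ := hcmp m₁ le_rfl hmm.le hm₁ s ⟨hs.1.le, hs.2.le⟩
      have h0 := mul_nonneg (pow_nonneg (H₁.r_pos s₀ ⟨hm₁.le, hα₁⟩).le (n - 1))
        (H₁.p_nonneg ⟨hm₁.le, hα₁⟩)
      have h8 := pow_lt_pow_left₀ hy h0 two_ne_zero
      have hs2 : s ∈ Ico m₂ α₂ := ⟨(hmm.trans hs.1).le, hs.2.trans hα₂⟩
      have h9 := lt_of_pow_lt_pow_left₀ 2 (mul_nonneg (pow_nonneg (H₂.r_pos s hs2).le (n - 1))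
        (H₂.p_nonneg hs2)) (by linarith :
          (r₁ s ^ (n - 1) * p₁ s) ^ 2 < (r₂ s ^ (n - 1) * p₂ s) ^ 2)
      rw [← sub_mul]
      exact mul_nonpos_of_nonpos_of_nonneg (by linarith) (hg s (by linarith [hs.2]))
  linarith

/-- Behaviour of the two branches between `s₀ ∈ [-β, β]` and `-β`. -/
lemma middle_comparison {n : ℕ} {f : ℝ → ℝ} {b β : ℝ} (hn : 2 ≤ n) (hf : Continuous f)
    (h1 : Hf1 f b β) {m₁ m₂ α₁ α₂ s₀ : ℝ} {r₁ r₂ p₁ p₂ : ℝ → ℝ}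
    (H₁ : SBranch n f m₁ α₁ r₁ p₁) (H₂ : SBranch n f m₂ α₂ r₂ p₂) (hs₀ : s₀ ∈ Icc (-β) β)
    (hm₁ : m₁ < -β) (hm₂ : m₂ < -β) (hα₁ : s₀ < α₁) (hα₂ : s₀ < α₂) (hr : r₂ s₀ ≤ r₁ s₀)
    (hy : r₁ s₀ ^ (n - 1) * p₁ s₀ < r₂ s₀ ^ (n - 1) * p₂ s₀) :
    r₂ (-β) ≤ r₁ (-β) ∧ r₁ (-β) ^ (n - 1) * p₁ (-β) < r₂ (-β) ^ (n - 1) * p₂ (-β) := by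
  have hn' : (2:ℝ) ≤ n := by exact_mod_cast hn
  have i₁ : ∀ s ∈ Icc (-β) s₀, s ∈ Ioo m₁ α₁ := fun s hs =>
    ⟨hm₁.trans_le hs.1, hs.2.trans_lt hα₁⟩
  have i₂ : ∀ s ∈ Icc (-β) s₀, s ∈ Ioo m₂ α₂ := fun s hs =>
    ⟨hm₂.trans_le hs.1, hs.2.trans_lt hα₂⟩
  have hF : ∀ s ∈ Icc (-β) s₀, Fint f s ≤ 0 := fun s hs =>
    Fint_nonpos hf h1 ⟨hs.1, hs.2.trans hs₀.2⟩
  have hq : ∀ i, ∀ s ∈ Icc (-β) s₀, r₂ s ≤ r₁ s → 0 < r₂ s ^ i ∧ r₂ s ^ i ≤ r₁ s ^ i :=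
    fun i s hs hrs => ⟨pow_pos (H₂.r_pos s ⟨(i₂ s hs).1.le, (i₂ s hs).2⟩) _,
      pow_le_pow_left₀ (H₂.r_pos s ⟨(i₂ s hs).1.le, (i₂ s hs).2⟩).le hrs _⟩
  have cr₁ := H₁.cont_r.mono (Icc_subset_Icc hm₁.le hα₁.le)
  have cr₂ := H₂.cont_r.mono (Icc_subset_Icc hm₂.le hα₂.le)
  have cp₁ := H₁.cont_p.mono (Icc_subset_Icc hm₁.le hα₁.le)
  have cp₂ := H₂.cont_p.mono (Icc_subset_Icc hm₂.le hα₂.le)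
  have cF := (continuous_Fint hf).continuousOn (s := Icc (-β) s₀)
  have hd : s₀ ∈ Icc (-β) s₀ := ⟨hs₀.1, le_rfl⟩
  have hD0 : 0 < (r₂ s₀ ^ (n - 1)) ^ 2 * (p₂ s₀ ^ 2 + 2 * Fint f s₀) -
      (r₁ s₀ ^ (n - 1)) ^ 2 * (p₁ s₀ ^ 2 + 2 * Fint f s₀) := by
    have h0 : 0 ≤ r₁ s₀ ^ (n - 1) * p₁ s₀ := mul_nonneg
      ((hq (n - 1) s₀ hd hr).1.le.trans (hq (n - 1) s₀ hd hr).2) (H₁.p_pos s₀ (i₁ s₀ hd)).le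
    have h3 := pow_lt_pow_left₀ hy h0 two_ne_zero
    have h4 := pow_le_pow_left₀ (hq (n - 1) s₀ hd hr).1.le (hq (n - 1) s₀ hd hr).2 2
    nlinarith [hF s₀ hd]
  have key := branch_comparison
    (D := fun s => (r₂ s ^ (n - 1)) ^ 2 * (p₂ s ^ 2 + 2 * Fint f s) -
      (r₁ s ^ (n - 1)) ^ 2 * (p₁ s ^ 2 + 2 * Fint f s))
    cr₁ cr₂ cp₁ cp₂ (by fun_prop) (fun s hs => H₁.deriv_r s (i₁ s (Ioo_subset_Icc_self hs)))
    (fun s hs => H₂.deriv_r s (i₂ s (Ioo_subset_Icc_self hs)))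
    (fun s hs => H₁.p_pos s (i₁ s (Ioo_subset_Icc_self hs)))
    (fun s hs => (H₂.weighted_energy_hasDerivAt hn hf (i₂ s (Ioo_subset_Icc_self hs))).sub
      (H₁.weighted_energy_hasDerivAt hn hf (i₁ s (Ioo_subset_Icc_self hs))))
    hr hD0
    (by
      intro s hs hrs hD
      obtain ⟨h3, h4⟩ := hq (n - 1) s hs hrs
      have h5 := pow_le_pow_left₀ h3.le h4 2
      have hp2 := H₂.p_pos s (i₂ s hs)
      have hE := H₂.energy s (Ioo_subset_Icc_self (i₂ s hs))
      by_contra hcon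
      have h6 := pow_le_pow_left₀ hp2.le (not_lt.1 hcon) 2
      have h7 : p₂ s ^ 2 + 2 * Fint f s ≤ p₁ s ^ 2 + 2 * Fint f s := by linarith
      have := mul_le_mul h5 h7 hE (by positivity)
      linarith)
    (by
      intro s hs hrs hps
      have hs' := Ioo_subset_Icc_self hs
      obtain ⟨h3, h4⟩ := hq (n - 1) s hs' hrs
      obtain ⟨h5, h6⟩ := hq (n - 2) s hs' hrs
      have h7 : r₂ s ^ (n - 1) * r₂ s ^ (n - 2) / p₂ s ≤ r₁ s ^ (n - 1) * r₁ s ^ (n - 2) / p₁ s :=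
        div_le_div₀ (mul_nonneg (h3.le.trans h4) (h5.le.trans h6))
          (mul_le_mul h4 h6 h5.le (h3.le.trans h4)) (H₁.p_pos s (i₁ s hs')) hps.le
      rw [← mul_sub]
      refine mul_nonpos_of_nonneg_of_nonpos ?_ (by linarith)
      have := hF s hs'
      nlinarith)
    (-β) ⟨le_rfl, hs₀.1⟩
  obtain ⟨h3, _, h5⟩ := key
  refine ⟨h3, ?_⟩
  have hd' : -β ∈ Icc (-β) s₀ := ⟨le_rfl, hs₀.1⟩
  have hFβ : Fint f (-β) = 0 := by rw [Fint_neg h1, h1.2.2.2.2.2.2.2]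
  refine lt_of_pow_lt_pow_left₀ 2 (mul_nonneg (hq (n - 1) _ hd' h3).1.le
    (H₂.p_pos _ (i₂ _ hd')).le) ?_
  simp only [hFβ, mul_zero, add_zero] at h5
  rw [mul_pow, mul_pow]
  linarith

/-- At `-β`, where `F` vanishes, the order of the fluxes gives the order of `P`. -/
lemma Pcoord_lt_at_neg {n : ℕ} {f : ℝ → ℝ} {b β : ℝ} (hn : 2 ≤ n) (h1 : Hf1 f b β)
    {r₁ r₂ p₁ p₂ : ℝ → ℝ} (hr₂ : 0 < r₂ (-β)) (hr : r₂ (-β) ≤ r₁ (-β)) (hp₁ : 0 ≤ p₁ (-β))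
    (hy : r₁ (-β) ^ (n - 1) * p₁ (-β) < r₂ (-β) ^ (n - 1) * p₂ (-β)) :
    Pcoord n f r₂ p₂ (-β) < Pcoord n f r₁ p₁ (-β) := by
  have hFβ : Fint f (-β) = 0 := by rw [Fint_neg h1, h1.2.2.2.2.2.2.2]
  obtain ⟨i, rfl⟩ : ∃ i, n = i + 2 := ⟨n - 2, by omega⟩
  simp only [Pcoord, hFβ, zero_div, mul_zero, zero_mul, zero_sub, sub_zero]
  simp only [show i + 2 - 1 = i + 1 by omega] at hy
  have hr₁ := hr₂.trans_le hr
  have h3 := pow_lt_pow_left₀ hy (by positivity) two_ne_zero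
  have h4 : r₂ (-β) ^ i ≤ r₁ (-β) ^ i := pow_le_pow_left₀ hr₂.le hr _
  have h5 : 0 ≤ r₂ (-β) ^ (i + 2) * p₂ (-β) ^ 2 := by positivity
  have h6 := mul_le_mul_of_nonneg_left h4 h5
  have h7 : 0 < r₁ (-β) ^ i := by positivity
  refine neg_lt_neg (lt_of_mul_lt_mul_right ?_ h7.le)
  calc r₁ (-β) ^ (i + 2) * p₁ (-β) ^ 2 * r₁ (-β) ^ i
      = (r₁ (-β) ^ (i + 1) * p₁ (-β)) ^ 2 := by ring
    _ < (r₂ (-β) ^ (i + 1) * p₂ (-β)) ^ 2 := h3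
    _ = r₂ (-β) ^ (i + 2) * p₂ (-β) ^ 2 * r₂ (-β) ^ i := by ring
    _ ≤ _ := h6

/-- At a crossing below `-β` with `p₁ < p₂`, the order of `P` is reversed. -/
lemma Pcoord_lt_at_crossing {n : ℕ} {f : ℝ → ℝ} {b β : ℝ} (hf : Continuous f)
    (h1 : Hf1 f b β) {s : ℝ} (hs : s < -β) {r₁ r₂ p₁ p₂ : ℝ → ℝ} (hr₁ : 0 < r₁ s)
    (hr : r₁ s = r₂ s) (hp₁ : 0 ≤ p₁ s) (hp : p₁ s < p₂ s) :
    Pcoord n f r₂ p₂ s < Pcoord n f r₁ p₁ s := by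
  have hF := Fint_pos_of_lt_neg hf h1 hs
  have hfs : f s < 0 := neg_of_lt_neg h1 (by linarith [h1.2.2.2.1])
  have hq : Fint f s / f s < 0 := div_neg_of_pos_of_neg hF hfs
  have h3 := pow_lt_pow_left₀ hp hp₁ two_ne_zero
  unfold Pcoord
  rw [← hr]
  have h4 : 0 < r₁ s ^ n := by positivity
  have h5 : r₁ s ^ (n - 1) * p₁ s ≤ r₁ s ^ (n - 1) * p₂ s :=
    mul_le_mul_of_nonneg_left hp.le (by positivity)
  have h6 : 2 * (n : ℝ) * (Fint f s / f s) ≤ 0 :=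
    mul_nonpos_of_nonneg_of_nonpos (by positivity) hq.le
  have h7 := mul_le_mul_of_nonpos_left h5 h6
  have h8 := mul_lt_mul_of_pos_left h3 h4
  linarith

/-- Two branches agreeing in `r` and `p` at one value of `s` agree for larger `s`. -/
lemma SBranch.eq_of_eq {n : ℕ} {f : ℝ → ℝ} (hf : Continuous f) {m₁ m₂ α₁ α₂ : ℝ}
    {r₁ r₂ p₁ p₂ : ℝ → ℝ} (H₁ : SBranch n f m₁ α₁ r₁ p₁) (H₂ : SBranch n f m₂ α₂ r₂ p₂)
    {s c : ℝ} (hsc : s ≤ c) (hm₁ : m₁ < s) (hm₂ : m₂ < s) (hα₁ : c < α₁) (hα₂ : c < α₂)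
    (hr : r₁ s = r₂ s) (hp : p₁ s = p₂ s) : r₁ c = r₂ c := by
  have i₁ : ∀ x ∈ Icc s c, x ∈ Ioo m₁ α₁ := fun x hx => ⟨hm₁.trans_le hx.1, hx.2.trans_lt hα₁⟩
  have i₂ : ∀ x ∈ Icc s c, x ∈ Ioo m₂ α₂ := fun x hx => ⟨hm₂.trans_le hx.1, hx.2.trans_lt hα₂⟩
  have cr₁ := H₁.cont_r.mono (Icc_subset_Icc hm₁.le hα₁.le)
  have cr₂ := H₂.cont_r.mono (Icc_subset_Icc hm₂.le hα₂.le)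
  have cp₁ := H₁.cont_p.mono (Icc_subset_Icc hm₁.le hα₁.le)
  have cp₂ := H₂.cont_p.mono (Icc_subset_Icc hm₂.le hα₂.le)
  have hp₁ : ∀ x ∈ Icc s c, 0 < p₁ x := fun x hx => H₁.p_pos x (i₁ x hx)
  have hp₂ : ∀ x ∈ Icc s c, 0 < p₂ x := fun x hx => H₂.p_pos x (i₂ x hx)
  have hr₁ : ∀ x ∈ Icc s c, 0 < r₁ x := fun x hx => H₁.r_pos x ⟨(i₁ x hx).1.le, (i₁ x hx).2⟩
  have hr₂ : ∀ x ∈ Icc s c, 0 < r₂ x := fun x hx => H₂.r_pos x ⟨(i₂ x hx).1.le, (i₂ x hx).2⟩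
  have cP := cp₁.mul cp₂
  have cR := cr₁.mul cr₂
  obtain ⟨A, hA⟩ := isCompact_Icc.exists_bound_of_continuousOn
    ((continuousOn_const (c := (1:ℝ)).div cP fun x hx => (mul_pos (hp₁ x hx) (hp₂ x hx)).ne').sub
      (continuousOn_const (c := (n:ℝ) - 1).div cR
        fun x hx => (mul_pos (hr₁ x hx) (hr₂ x hx)).ne'))
  obtain ⟨B, hB⟩ := isCompact_Icc.exists_bound_of_continuousOn
    (hf.continuousOn.div cP fun x hx => (mul_pos (hp₁ x hx) (hp₂ x hx)).ne')
  have key := nonneg_of_mul_le_hasDerivAt (C := A + 2 * B)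
    (g := fun x => -((r₁ x - r₂ x) ^ 2 + (p₁ x - p₂ x) ^ 2))
    (g' := fun x => -(2 * (r₁ x - r₂ x) * (-(1 / p₁ x) - -(1 / p₂ x)) + 2 * (p₁ x - p₂ x) *
      ((((n : ℝ) - 1) / r₁ x - f x / p₁ x) - (((n : ℝ) - 1) / r₂ x - f x / p₂ x))))
    hsc (((cr₁.sub cr₂).pow 2).add ((cp₁.sub cp₂).pow 2)).neg ?_ ?_ ?_
  · have h0 : (r₁ c - r₂ c) ^ 2 = 0 := by
      nlinarith [sq_nonneg (r₁ c - r₂ c), sq_nonneg (p₁ c - p₂ c)]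
    linarith [pow_eq_zero_iff two_ne_zero |>.1 h0]
  · intro x hx
    have hx' := Ioo_subset_Icc_self hx
    refine ((((H₁.deriv_r x (i₁ x hx')).sub (H₂.deriv_r x (i₂ x hx'))).pow 2).add
      (((H₁.deriv_p x (i₁ x hx')).sub (H₂.deriv_p x (i₂ x hx'))).pow 2)).neg.congr_deriv ?_
    simp only [Nat.cast_ofNat, Nat.add_one_sub_one, pow_one, Pi.sub_apply]
  · intro x hx
    have hx' := Ioo_subset_Icc_self hx
    have h1 := (hp₁ x hx').ne'
    have h2 := (hp₂ x hx').ne'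
    have h3 := (hr₁ x hx').ne'
    have h4 := (hr₂ x hx').ne'
    have hAx : |1 / (p₁ x * p₂ x) - ((n : ℝ) - 1) / (r₁ x * r₂ x)| ≤ A := hA x hx'
    have hBx : |f x / (p₁ x * p₂ x)| ≤ B := hB x hx'
    rw [abs_le] at hAx hBx
    have e : 2 * (r₁ x - r₂ x) * (-(1 / p₁ x) - -(1 / p₂ x)) + 2 * (p₁ x - p₂ x) *
        ((((n : ℝ) - 1) / r₁ x - f x / p₁ x) - (((n : ℝ) - 1) / r₂ x - f x / p₂ x)) =
        (1 / (p₁ x * p₂ x) - ((n : ℝ) - 1) / (r₁ x * r₂ x)) *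
          (2 * ((r₁ x - r₂ x) * (p₁ x - p₂ x))) +
        2 * (f x / (p₁ x * p₂ x)) * (p₁ x - p₂ x) ^ 2 := by
      field_simp
      ring
    rw [e]
    set a := 1 / (p₁ x * p₂ x) - ((n : ℝ) - 1) / (r₁ x * r₂ x)
    set q := f x / (p₁ x * p₂ x)
    set X := r₁ x - r₂ x
    set Z := p₁ x - p₂ x
    have h5 : a * (2 * (X * Z)) ≤ A * (X ^ 2 + Z ^ 2) := by
      rcases le_total 0 (X * Z) with h0 | h0
      · nlinarith [sq_nonneg (X - Z), sq_nonneg (X + Z)]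
      · nlinarith [sq_nonneg (X - Z), sq_nonneg (X + Z)]
    have h6 : q * Z ^ 2 ≤ B * Z ^ 2 := mul_le_mul_of_nonneg_right hBx.2 (sq_nonneg Z)
    have h7 : 0 ≤ B * X ^ 2 := mul_nonneg (by linarith) (sq_nonneg X)
    linarith
  · simp [hr, hp]

/-- The first crossing of the two branches, counted from the top. -/
lemma exists_first_crossing {n : ℕ} {f : ℝ → ℝ} (hf : Continuous f) {m₁ m₂ α₁ α₂ : ℝ}
    {r₁ r₂ p₁ p₂ : ℝ → ℝ} (H₁ : SBranch n f m₁ α₁ r₁ p₁) (H₂ : SBranch n f m₂ α₂ r₂ p₂)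
    (h12 : α₁ < α₂) {t : ℝ} (hm₁ : m₁ < t) (hm₂ : m₂ < t) (ht : t < α₁) (hr : r₁ t = r₂ t) :
    ∃ s, m₁ < s ∧ m₂ < s ∧ s < α₁ ∧ r₁ s = r₂ s ∧ (∀ x ∈ Ioc s α₁, r₁ x < r₂ x) ∧
      p₁ s < p₂ s := by
  have cr₁ := H₁.cont_r.mono (Icc_subset_Icc_left hm₁.le)
  have cr₂ := H₂.cont_r.mono (Icc_subset_Icc hm₂.le h12.le)
  have cp₁ := H₁.cont_p.mono (Icc_subset_Icc_left hm₁.le)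
  have cp₂ := H₂.cont_p.mono (Icc_subset_Icc hm₂.le h12.le)
  have hcl : IsCompact (Icc t α₁ ∩ (fun x => r₁ x - r₂ x) ⁻¹' Ici 0) :=
    isCompact_Icc.of_isClosed_subset
      ((cr₁.sub cr₂).preimage_isClosed_of_isClosed isClosed_Icc isClosed_Ici) inter_subset_left
  obtain ⟨s, ⟨hs, hsg⟩, hmax⟩ := hcl.exists_isGreatest ⟨t, ⟨le_rfl, ht.le⟩, by simp [hr]⟩
  have hsg' : r₂ s ≤ r₁ s := by simpa using hsg
  have hend : r₁ α₁ < r₂ α₁ := by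
    rw [H₁.r_init]
    exact H₂.r_pos _ ⟨(hm₂.trans ht).le, h12⟩
  have hsα : s < α₁ := lt_of_le_of_ne hs.2 fun h => by
    rw [h] at hsg'
    linarith
  have hlt : ∀ x ∈ Ioc s α₁, r₁ x < r₂ x := by
    intro x hx
    by_contra hcon
    exact absurd (hmax ⟨⟨hs.1.trans hx.1.le, hx.2⟩, by simpa using hcon⟩) (not_le.2 hx.1)
  have hm₁s := hm₁.trans_le hs.1
  have hm₂s := hm₂.trans_le hs.1
  have heq : r₁ s = r₂ s := by
    obtain ⟨x, hx, hx0⟩ := intermediate_value_Icc' hs.2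
      ((cr₁.sub cr₂).mono (Icc_subset_Icc_left hs.1))
      (show (0:ℝ) ∈ Icc (r₁ α₁ - r₂ α₁) (r₁ s - r₂ s) from ⟨by linarith, by linarith⟩)
    have hx0' : r₁ x - r₂ x = 0 := hx0
    rcases hx.1.eq_or_lt with h | h
    · rw [h]
      linarith
    · linarith [hlt x ⟨h, hx.2⟩]
  refine ⟨s, hm₁s, hm₂s, hsα, heq, hlt, lt_of_le_of_ne ?_ fun hp => ?_⟩
  · by_contra hcon
    have hev : ∀ᶠ x in nhdsWithin s (Ici s), p₂ x < p₁ x := by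
      have k₁ := (H₁.deriv_p s ⟨hm₁s, hsα⟩).continuousAt
      have k₂ := (H₂.deriv_p s ⟨hm₂s, hsα.trans h12⟩).continuousAt
      exact (k₂.eventually_lt k₁ (not_le.1 hcon)).filter_mono nhdsWithin_le_nhds
    obtain ⟨c₀, hc₀, hsub⟩ := mem_nhdsGE_iff_exists_Icc_subset.1 hev
    set c := min c₀ ((s + α₁) / 2) with hc
    have hsc : s < c := lt_min hc₀ (by linarith)
    have hcα : c < α₁ := (min_le_right _ _).trans_lt (by linarith)
    have := le_of_hasDerivAt_nonneg (g := fun x => r₁ x - r₂ x) hsc.le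
      ((cr₁.sub cr₂).mono (Icc_subset_Icc hs.1 hcα.le))
      (fun x hx => (H₁.deriv_r x ⟨hm₁s.trans hx.1, hx.2.trans hcα⟩).sub
        (H₂.deriv_r x ⟨hm₂s.trans hx.1, hx.2.trans (hcα.trans h12)⟩)) fun x hx => by
        have h3 : p₂ x < p₁ x := hsub ⟨hx.1.le, hx.2.le.trans (min_le_left _ _)⟩
        have := one_div_le_one_div_of_le
          (H₂.p_pos x ⟨hm₂s.trans hx.1, hx.2.trans (hcα.trans h12)⟩) h3.le
        linarith
    linarith [hlt c ⟨hsc, hcα.le⟩]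
  · have h3 : (s + α₁) / 2 < α₁ := by linarith
    have h4 := H₁.eq_of_eq hf H₂ (by linarith : s ≤ (s + α₁) / 2) hm₁s hm₂s h3
      (h3.trans h12) heq hp
    linarith [hlt ((s + α₁) / 2) ⟨by linarith, h3.le⟩]

lemma Hf3.mul_sub_le {f : ℝ → ℝ} {b β : ℝ} (h1 : Hf1 f b β) (h2 : Hf2 f) (h3 : Hf3 f β)
    {x y : ℝ} (hx : β < x) (hxy : x ≤ y) : f y * (x - β) ≤ f x * (y - β) := by
  have hβ : 0 < β := h1.2.2.1.trans h1.2.2.2.1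
  have hd : ∀ s, β < s → HasDerivAt (fun s => f s / (s - β))
      ((deriv f s * (s - β) - f s * 1) / (s - β) ^ 2) s := fun s hs =>
    (h2.2.1 s (hβ.trans hs)).hasDerivAt.div ((hasDerivAt_id s).sub_const β) (by
      simpa using (sub_pos.2 hs).ne')
  have key := ge_of_hasDerivAt_nonpos hxy
    (fun s hs => (hd s (hx.trans_le hs.1)).continuousAt.continuousWithinAt)
    (fun s hs => hd s (hx.trans hs.1))
    (fun s hs => div_nonpos_of_nonpos_of_nonneg
      (by linarith [h3 s (hx.trans hs.1).le]) (sq_nonneg _))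
  rwa [div_le_div_iff₀ (by linarith) (by linarith)] at key

/-- Before the first crossing, the solution starting higher stays above. -/
lemma FirstBranch.lt_of_inv_lt {n : ℕ} {f : ℝ → ℝ} {β α₁ α₂ T₁ T₂ : ℝ} {v₁ v₂ ρ₁ ρ₂ : ℝ → ℝ}
    (B₁ : FirstBranch n f β α₁ v₁ T₁) (B₂ : FirstBranch n f β α₂ v₂ T₂)
    (hρ₁ : InvBranch v₁ ρ₁ 0 T₁ (v₁ T₁) α₁) (hρ₂ : InvBranch v₂ ρ₂ 0 T₂ (v₂ T₂) α₂)
    (h12 : α₁ < α₂) {s : ℝ} (hs : s ∈ Ioo (v₁ T₁) α₁) (hm : v₂ T₂ < s)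
    (hlt : ∀ x ∈ Ioc s α₁, ρ₁ x < ρ₂ x) {r : ℝ} (hr : r ∈ Ico 0 (ρ₁ s)) :
    s < v₁ r ∧ v₁ r < v₂ r := by
  have hR := hρ₁.1 s ⟨hs.1.le, hs.2.le⟩
  have hrT : r ∈ Icc 0 T₁ := ⟨hr.1, hr.2.le.trans hR.1.2⟩
  have h3 : s < v₁ r := by
    have := B₁.anti hrT hR.1 hr.2
    rwa [hR.2] at this
  have h4 := B₁.mem_Icc hrT
  have h5 := hlt (v₁ r) ⟨h3, h4.2⟩
  rw [B₁.inv_apply hρ₁ hrT] at h5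
  have h6 := hρ₂.1 (v₁ r) ⟨(hm.trans h3).le, h4.2.trans h12.le⟩
  have h7 := B₂.anti ⟨hr.1, h5.le.trans h6.1.2⟩ h6.1 h5
  exact ⟨h3, by rwa [h6.2] at h7⟩

/-- Under (f3) the first crossing happens at or below `β`. -/
lemma crossing_le_of_Hf3 {n : ℕ} {f : ℝ → ℝ} {b β α₁ α₂ T₁ T₂ : ℝ} {v₁ v₂ ρ₁ ρ₂ : ℝ → ℝ}
    (hn : 2 ≤ n) (h1 : Hf1 f b β) (h2 : Hf2 f) (h3 : Hf3 f β)
    (B₁ : FirstBranch n f β α₁ v₁ T₁) (B₂ : FirstBranch n f β α₂ v₂ T₂)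
    (hρ₁ : InvBranch v₁ ρ₁ 0 T₁ (v₁ T₁) α₁) (hρ₂ : InvBranch v₂ ρ₂ 0 T₂ (v₂ T₂) α₂)
    (h12 : α₁ < α₂) {s : ℝ} (hs : s ∈ Ioo (v₁ T₁) α₁) (hm : v₂ T₂ < s)
    (hr : ρ₁ s = ρ₂ s) (hlt : ∀ x ∈ Ioc s α₁, ρ₁ x < ρ₂ x)
    (hp : -deriv v₁ (ρ₁ s) < -deriv v₂ (ρ₂ s)) : s ≤ β := by
  by_contra hcon
  push Not at hcon
  have hR := B₁.inv_mem_Ioo hρ₁ hs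
  have hcmp := fun r hr => B₁.lt_of_inv_lt B₂ hρ₁ hρ₂ h12 hs hm hlt (r := r) hr
  have hv₁ := (hρ₁.1 s ⟨hs.1.le, hs.2.le⟩).2
  have hv₂ := (hρ₂.1 s ⟨hm.le, (hs.2.trans h12).le⟩).2
  rw [← hr] at hv₂ hp
  set R := ρ₁ s
  have key := ge_of_hasDerivAt_nonpos
    (g := fun r => (r ^ (n - 1) * deriv v₁ r) * (v₂ r - β) -
      (r ^ (n - 1) * deriv v₂ r) * (v₁ r - β))
    (g' := fun r => r ^ (n - 1) * (f (v₂ r) * (v₁ r - β) - f (v₁ r) * (v₂ r - β))) hR.1.le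
    (((B₁.sol.flux_contOn.mono fun x hx => hx.1).mul
      ((B₂.sol.contOn le_rfl).sub continuousOn_const)).sub
      ((B₂.sol.flux_contOn.mono fun x hx => hx.1).mul
      ((B₁.sol.contOn le_rfl).sub continuousOn_const)))
    (fun r hr' => by
      refine (((B₁.sol.flux_hasDerivAt (by omega) hr'.1).mul
        ((B₂.sol.hasDerivAt r hr'.1).sub_const β)).sub
        ((B₂.sol.flux_hasDerivAt (by omega) hr'.1).mul
        ((B₁.sol.hasDerivAt r hr'.1).sub_const β))).congr_deriv ?_
      ring)
    (fun r hr' => by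
      obtain ⟨k₁, k₂⟩ := hcmp r ⟨hr'.1.le, hr'.2⟩
      have := h3.mul_sub_le h1 h2 (hcon.trans k₁) k₂.le
      exact mul_nonpos_of_nonneg_of_nonpos (pow_nonneg hr'.1.le _) (by linarith))
  simp only [B₁.sol.deriv_zero, B₂.sol.deriv_zero, mul_zero, zero_mul, sub_zero, hv₁, hv₂] at key
  have h4 : 0 < R ^ (n - 1) * (s - β) * (deriv v₁ R - deriv v₂ R) :=
    mul_pos (mul_pos (pow_pos hR.1 _) (by linarith)) (by linarith)
  linarith

lemma exists_inverse_of_deriv_neg {φ φ' : ℝ → ℝ} {c d : ℝ} (hcd : c < d)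
    (hc : ContinuousOn φ (Icc c d)) (hd : ∀ x ∈ Ioo c d, HasDerivAt φ (φ' x) x)
    (hneg : ∀ x ∈ Ioo c d, φ' x < 0) :
    φ d < φ c ∧ ∃ S : ℝ → ℝ, ContinuousOn S (Icc (φ d) (φ c)) ∧ S (φ d) = d ∧ S (φ c) = c ∧
      (∀ y ∈ Icc (φ d) (φ c), S y ∈ Icc c d ∧ φ (S y) = y) ∧
      ∀ y ∈ Ioo (φ d) (φ c), S y ∈ Ioo c d ∧ HasDerivAt S (φ' (S y))⁻¹ y := by
  have hanti : StrictAntiOn φ (Icc c d) := fun x hx y hy hxy =>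
    gt_of_hasDerivAt_neg hxy (hc.mono (Icc_subset_Icc hx.1 hy.2))
      (fun z hz => hd z ⟨hx.1.trans_lt hz.1, hz.2.trans_le hy.2⟩)
      fun z hz => hneg z ⟨hx.1.trans_lt hz.1, hz.2.trans_le hy.2⟩
  have hcm : c ∈ Icc c d := ⟨le_rfl, hcd.le⟩
  have hdm : d ∈ Icc c d := ⟨hcd.le, le_rfl⟩
  have hsurj : ∀ y ∈ Icc (φ d) (φ c), ∃ x ∈ Icc c d, φ x = y := fun y hy =>
    intermediate_value_Icc' hcd.le hc hy
  choose! S hS hφS using hsurj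
  have hinv : ∀ x ∈ Icc c d, S (φ x) = x := fun x hx => by
    have hy : φ x ∈ Icc (φ d) (φ c) :=
      ⟨hanti.antitoneOn hx hdm hx.2, hanti.antitoneOn hcm hx hx.1⟩
    exact hanti.injOn (hS _ hy) hx (hφS _ hy)
  have hcontS : ContinuousOn S (Icc (φ d) (φ c)) := by
    rw [continuousOn_iff_isClosed]
    intro t ht
    refine ⟨φ '' (Icc c d ∩ t), ((isCompact_Icc.inter_right ht).image_of_continuousOn
      (hc.mono inter_subset_left)).isClosed, ?_⟩
    ext y
    constructor
    · rintro ⟨hy1, hy2⟩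
      exact ⟨⟨S y, ⟨hS y hy2, hy1⟩, hφS y hy2⟩, hy2⟩
    · rintro ⟨⟨x, hx, rfl⟩, hy2⟩
      refine ⟨?_, hy2⟩
      rw [mem_preimage, hinv x hx.1]
      exact hx.2
  refine ⟨hanti hcm hdm hcd, S, hcontS, hinv d hdm, hinv c hcm,
    fun y hy => ⟨hS y hy, hφS y hy⟩, fun y hy => ?_⟩
  have hy' := Ioo_subset_Icc_self hy
  have hmem : S y ∈ Ioo c d := by
    refine ⟨lt_of_le_of_ne (hS y hy').1 fun h => ?_, lt_of_le_of_ne (hS y hy').2 fun h => ?_⟩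
    · have := hφS y hy'
      rw [← h] at this
      exact hy.2.ne this.symm
    · have := hφS y hy'
      rw [h] at this
      exact hy.1.ne this
  refine ⟨hmem, HasDerivAt.of_local_left_inverse
    (hcontS.continuousAt (Icc_mem_nhds hy.1 hy.2)) (hd _ hmem) (hneg _ hmem).ne ?_⟩
  filter_upwards [Ioo_mem_nhds hy.1 hy.2] with z hz
  exact hφS z (Ioo_subset_Icc_self hz)

lemma eventually_lt_right_of_deriv_neg {g : ℝ → ℝ} {d e : ℝ} (h : HasDerivAt g d e) (hd : d < 0) :
    ∀ᶠ x in nhdsWithin e (Ioi e), g x < g e := by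
  have h1 := (hasDerivAt_iff_tendsto_slope.1 h).mono_left
    (nhdsWithin_mono e fun x (hx : e < x) => hx.ne')
  filter_upwards [h1.eventually (gt_mem_nhds hd), self_mem_nhdsWithin] with x hx hxe
  have hxe' : 0 < x - e := sub_pos.2 hxe
  rw [slope_def_field, div_lt_iff₀ hxe', zero_mul] at hx
  linarith

/-- A solution above the level `s₀`, parametrized by `θ = -r u'/u`, with `S = u` and
`γ = r² f(u)/u`. -/
structure ThetaBranch (n : ℕ) (f : ℝ → ℝ) (s₀ α Θ : ℝ) (S γ : ℝ → ℝ) : Prop where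
  pos : 0 < Θ
  cont_S : ContinuousOn S (Icc 0 Θ)
  cont_γ : ContinuousOn γ (Icc 0 Θ)
  S_zero : S 0 = α
  S_end : S Θ = s₀
  S_gt : ∀ θ ∈ Ioo 0 Θ, s₀ < S θ
  γ_zero : γ 0 = 0
  γ_pos : ∀ θ ∈ Ioc 0 Θ, 0 < γ θ
  N_pos : ∀ θ ∈ Ioc 0 Θ, 0 < θ ^ 2 - ((n : ℝ) - 2) * θ + γ θ
  deriv_S : ∀ θ ∈ Ioo 0 Θ,
    HasDerivAt S (-(S θ * θ / (θ ^ 2 - ((n : ℝ) - 2) * θ + γ θ))) θ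
  deriv_γ : ∀ θ ∈ Ioo 0 Θ,
    HasDerivAt γ (γ θ * (2 - (S θ * deriv f (S θ) / f (S θ) - 1) * θ) /
      (θ ^ 2 - ((n : ℝ) - 2) * θ + γ θ)) θ

lemma Hf5.le_ratio {n : ℕ} {f : ℝ → ℝ} {β : ℝ} (h5 : Hf5 f β) (h6 : Hf6 n f β) {s : ℝ}
    (hs : β ≤ s) : s * deriv f s / f s ≤ (n : ℝ) / ((n : ℝ) - 2) :=
  (h5 (mem_Ici.2 le_rfl) hs hs).trans h6

/-- `(q - 1) θ ≤ 2` for `θ ≤ n - 2`. -/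
lemma Hf5.mul_le_two {n : ℕ} {f : ℝ → ℝ} {β : ℝ} (hn : 2 < n) (h5 : Hf5 f β) (h6 : Hf6 n f β)
    {s θ : ℝ} (hs : β ≤ s) (hθ : 0 ≤ θ) (hθn : θ ≤ (n : ℝ) - 2) :
    (s * deriv f s / f s - 1) * θ ≤ 2 := by
  have hn' : (0:ℝ) < (n : ℝ) - 2 := by
    have : (2:ℝ) < n := by exact_mod_cast hn
    linarith
  have h := h5.le_ratio h6 hs
  have h3 : (n : ℝ) / ((n : ℝ) - 2) - 1 = 2 / ((n : ℝ) - 2) := by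
    field_simp
    ring
  calc (s * deriv f s / f s - 1) * θ ≤ (2 / ((n : ℝ) - 2)) * θ :=
        mul_le_mul_of_nonneg_right (by linarith) hθ
    _ ≤ (2 / ((n : ℝ) - 2)) * ((n : ℝ) - 2) := by gcongr
    _ = 2 := by field_simp

namespace SBranch

variable {n : ℕ} {f : ℝ → ℝ} {b β m α : ℝ} {r p : ℝ → ℝ}

lemma theta_hasDerivAt (h : SBranch n f m α r p) {s : ℝ} (hs : s ∈ Ioo m α) (hs0 : 0 < s) :
    HasDerivAt (fun s => r s * p s / s)
      (-(((r s * p s / s) ^ 2 - ((n : ℝ) - 2) * (r s * p s / s) + r s ^ 2 * f s / s) /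
        (s * (r s * p s / s)))) s := by
  have h1 := (h.p_pos s hs).ne'
  have h2 := (h.r_pos s ⟨hs.1.le, hs.2⟩).ne'
  refine (((h.deriv_r s hs).mul (h.deriv_p s hs)).div (hasDerivAt_id s) hs0.ne').congr_deriv ?_
  simp only [id, Pi.mul_apply]
  field_simp
  ring

lemma gamma_hasDerivAt (h2 : Hf2 f) (h : SBranch n f m α r p) {s : ℝ} (hs : s ∈ Ioo m α)
    (hs0 : 0 < s) (hfs : 0 < f s) :
    HasDerivAt (fun s => r s ^ 2 * f s / s)
      (-(r s ^ 2 * f s / s * (2 - (s * deriv f s / f s - 1) * (r s * p s / s)) /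
        (s * (r s * p s / s)))) s := by
  have h1 := (h.p_pos s hs).ne'
  have h3 := (h.r_pos s ⟨hs.1.le, hs.2⟩).ne'
  refine ((((h.deriv_r s hs).pow 2).mul (h2.2.1 s hs0).hasDerivAt).div
    (hasDerivAt_id s) hs0.ne').congr_deriv ?_
  simp only [id, Pi.mul_apply, Pi.pow_apply, Nat.cast_ofNat, Nat.add_one_sub_one, pow_one]
  field_simp
  ring

/-- `θ` is strictly decreasing in `s` above `β`. -/
lemma N_pos (hn : 2 < n) (h1 : Hf1 f b β) (h2 : Hf2 f) (h5 : Hf5 f β)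
    (h6 : Hf6 n f β) (h : SBranch n f m α r p) {s : ℝ} (hm : m < s) (hβ : β ≤ s) (hα : s < α) :
    0 < (r s * p s / s) ^ 2 - ((n : ℝ) - 2) * (r s * p s / s) + r s ^ 2 * f s / s := by
  have hb : 0 < b := h1.2.2.1
  have hbβ : b < β := h1.2.2.2.1
  set θ : ℝ → ℝ := fun s => r s * p s / s with hθ
  set G : ℝ → ℝ := fun s => r s ^ 2 * f s / s with hG
  set N : ℝ → ℝ := fun s => θ s ^ 2 - ((n : ℝ) - 2) * θ s + G s with hN
  have hs0 : ∀ x ∈ Ico s α, 0 < x := fun x hx => by linarith [hx.1]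
  have hfp : ∀ x ∈ Ico s α, 0 < f x := fun x hx => h1.2.2.2.2.1 x (by linarith [hx.1])
  have hmem : ∀ x ∈ Ico s α, x ∈ Ioo m α := fun x hx => ⟨hm.trans_le hx.1, hx.2⟩
  have hθpos : ∀ x ∈ Ico s α, 0 < θ x := fun x hx =>
    div_pos (mul_pos (h.r_pos x ⟨(hmem x hx).1.le, hx.2⟩) (h.p_pos x (hmem x hx))) (hs0 x hx)
  have hGpos : ∀ x ∈ Ico s α, 0 < G x := fun x hx =>
    div_pos (mul_pos (pow_pos (h.r_pos x ⟨(hmem x hx).1.le, hx.2⟩) 2) (hfp x hx)) (hs0 x hx)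
  have dθ : ∀ x ∈ Ico s α, HasDerivAt θ (-(N x / (x * θ x))) x := fun x hx =>
    h.theta_hasDerivAt (hmem x hx) (hs0 x hx)
  have dG : ∀ x ∈ Ico s α, HasDerivAt G
      (-(G x * (2 - (x * deriv f x / f x - 1) * θ x) / (x * θ x))) x := fun x hx =>
    h.gamma_hasDerivAt h2 (hmem x hx) (hs0 x hx) (hfp x hx)
  have dN := fun x hx => (((dθ x hx).pow 2).sub ((dθ x hx).const_mul ((n : ℝ) - 2))).add (dG x hx)
  by_contra hcon
  have hNs : N s ≤ 0 := not_lt.1 hcon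
  have hcontN : ∀ x ∈ Ico s α, ContinuousAt N x := fun x hx => (dN x hx).continuousAt
  have hle : ∀ x ∈ Ico s α, N x ≤ 0 := by
    intro x hx
    by_contra hxc
    have hcl : IsCompact (Icc s x ∩ N ⁻¹' Iic 0) :=
      isCompact_Icc.of_isClosed_subset
        (ContinuousOn.preimage_isClosed_of_isClosed (fun y hy =>
          (hcontN y ⟨hy.1, hy.2.trans_lt hx.2⟩).continuousWithinAt) isClosed_Icc isClosed_Iic)
        inter_subset_left
    obtain ⟨e, ⟨he, heN⟩, hmax⟩ := hcl.exists_isGreatest ⟨s, ⟨le_rfl, hx.1⟩, hNs⟩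
    have he' : e ∈ Ico s α := ⟨he.1, he.2.trans_lt hx.2⟩
    have hex : e < x := lt_of_le_of_ne he.2 fun h0 => hxc (h0 ▸ heN)
    have hgt : ∀ y ∈ Ioc e x, 0 < N y := fun y hy => by
      by_contra hyc
      exact absurd (hmax ⟨⟨he.1.trans hy.1.le, hy.2⟩, not_lt.1 hyc⟩) (not_le.2 hy.1)
    have heN0 : N e = 0 := by
      refine le_antisymm heN ?_
      obtain ⟨y, hy, hy0⟩ := intermediate_value_Icc hex.le (f := N) (fun y hy =>
        (hcontN y ⟨he.1.trans hy.1, hy.2.trans_lt hx.2⟩).continuousWithinAt)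
        (show (0:ℝ) ∈ Icc (N e) (N x) from ⟨heN, (not_le.1 hxc).le⟩)
      rcases hy.1.eq_or_lt with h0 | h0
      · rw [h0, hy0]
      · linarith [hgt y ⟨h0, hy.2⟩]
    have hθe := hθpos e he'
    have hGe := hGpos e he'
    have hθn : θ e < (n : ℝ) - 2 := by
      have : θ e * (θ e - ((n : ℝ) - 2)) < 0 := by
        have h7 : θ e ^ 2 - ((n : ℝ) - 2) * θ e + G e = 0 := heN0
        nlinarith
      linarith [neg_of_mul_neg_right this hθe.le]
    have hq : (e * deriv f e / f e - 1) * θ e < 2 := by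
      rcases le_or_gt (e * deriv f e / f e - 1) 0 with h0 | h0
      · nlinarith
      · have h8 := h5.mul_le_two hn h6 (hβ.trans he.1) (hθe.le.trans hθn.le) le_rfl
        have := mul_lt_mul_of_pos_left hθn h0
        linarith
    have hder : -(G e * (2 - (e * deriv f e / f e - 1) * θ e) / (e * θ e)) < 0 :=
      neg_neg_of_pos (div_pos (mul_pos hGe (by linarith)) (mul_pos (hs0 e he') hθe))
    have hd := (dN e he').congr_deriv
      (g' := -(G e * (2 - (e * deriv f e / f e - 1) * θ e) / (e * θ e))) (by
        rw [heN0]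
        simp)
    have hev := eventually_lt_right_of_deriv_neg hd hder
    obtain ⟨y, hy1, hy2⟩ := (hev.and (Ioc_mem_nhdsGT hex)).exists
    have h9 : N y < N e := hy1
    linarith [hgt y hy2]
  have hcontθ : ContinuousOn θ (Icc s α) := by
    have cr := h.cont_r.mono (Icc_subset_Icc_left hm.le)
    have cp := h.cont_p.mono (Icc_subset_Icc_left hm.le)
    exact (cr.mul cp).div continuousOn_id fun x hx => by
      have : 0 < x := by linarith [hx.1]
      exact this.ne'
  have := le_of_hasDerivAt_nonneg hα.le hcontθ (fun x hx => dθ x ⟨hx.1.le, hx.2⟩)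
    fun x hx => by
      have hx' : x ∈ Ico s α := ⟨hx.1.le, hx.2⟩
      have := div_nonpos_of_nonpos_of_nonneg (hle x hx') (mul_pos (hs0 x hx') (hθpos x hx')).le
      linarith
  have h0 : θ α = 0 := by simp [hθ, h.r_init]
  linarith [hθpos s ⟨le_rfl, hα⟩]

lemma exists_thetaBranch (hn : 2 < n) (hf : Continuous f) (h1 : Hf1 f b β) (h2 : Hf2 f)
    (h5 : Hf5 f β) (h6 : Hf6 n f β) (h : SBranch n f m α r p) {s₀ : ℝ} (hm : m < s₀)
    (hβ : β ≤ s₀) (hα : s₀ < α) :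
    ∃ Θ S γ, ThetaBranch n f s₀ α Θ S γ ∧ ∀ θ ∈ Ioc 0 Θ, S θ ∈ Ico s₀ α ∧
      r (S θ) * p (S θ) / S θ = θ ∧ γ θ = r (S θ) ^ 2 * f (S θ) / S θ := by
  have hb : 0 < b := h1.2.2.1
  have hbβ : b < β := h1.2.2.2.1
  have hs0 : ∀ x ∈ Icc s₀ α, 0 < x := fun x hx => by linarith [hx.1]
  have hfp : ∀ x ∈ Icc s₀ α, 0 < f x := fun x hx => h1.2.2.2.2.1 x (by linarith [hx.1])
  have hmem : ∀ x ∈ Ico s₀ α, x ∈ Ioo m α := fun x hx => ⟨hm.trans_le hx.1, hx.2⟩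
  have hN : ∀ x ∈ Ico s₀ α, 0 < (r x * p x / x) ^ 2 - ((n : ℝ) - 2) * (r x * p x / x) +
      r x ^ 2 * f x / x := fun x hx => h.N_pos hn h1 h2 h5 h6 (hmem x hx).1
        (hβ.trans hx.1) hx.2
  have hθpos : ∀ x ∈ Ico s₀ α, 0 < r x * p x / x := fun x hx =>
    div_pos (mul_pos (h.r_pos x ⟨(hmem x hx).1.le, hx.2⟩) (h.p_pos x (hmem x hx)))
      (hs0 x (Ico_subset_Icc_self hx))
  have cr := h.cont_r.mono (Icc_subset_Icc_left hm.le)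
  have cp := h.cont_p.mono (Icc_subset_Icc_left hm.le)
  have cθ : ContinuousOn (fun s => r s * p s / s) (Icc s₀ α) :=
    (cr.mul cp).div continuousOn_id fun x hx => (hs0 x hx).ne'
  have cG : ContinuousOn (fun s => r s ^ 2 * f s / s) (Icc s₀ α) :=
    ((cr.pow 2).mul hf.continuousOn).div continuousOn_id fun x hx => (hs0 x hx).ne'
  obtain ⟨hΘ, S, hcS, hS0, hSΘ, hS, hdS⟩ := exists_inverse_of_deriv_neg hα cθ
    (fun x hx => h.theta_hasDerivAt (hmem x (Ioo_subset_Ico_self hx))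
      (hs0 x (Ioo_subset_Icc_self hx))) fun x hx => neg_neg_of_pos
        (div_pos (hN x (Ioo_subset_Ico_self hx))
          (mul_pos (hs0 x (Ioo_subset_Icc_self hx)) (hθpos x (Ioo_subset_Ico_self hx))))
  have h0 : r α * p α / α = 0 := by simp [h.r_init]
  simp only [h0] at hΘ hcS hS0 hSΘ hS hdS
  set Θ := r s₀ * p s₀ / s₀ with hΘdef
  have hSmem : ∀ θ ∈ Ioc 0 Θ, S θ ∈ Ico s₀ α := by
    intro θ hθ
    obtain ⟨k1, k2⟩ := hS θ ⟨hθ.1.le, hθ.2⟩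
    refine ⟨k1.1, lt_of_le_of_ne k1.2 fun h3 => ?_⟩
    rw [h3, h0] at k2
    exact hθ.1.ne k2
  have hN' : ∀ θ ∈ Ioc 0 Θ, 0 < θ ^ 2 - ((n : ℝ) - 2) * θ + r (S θ) ^ 2 * f (S θ) / S θ := by
    intro θ hθ
    have := hN _ (hSmem θ hθ)
    rwa [(hS θ ⟨hθ.1.le, hθ.2⟩).2] at this
  have hdS' : ∀ θ ∈ Ioo 0 Θ, HasDerivAt S (-(S θ * θ /
      (θ ^ 2 - ((n : ℝ) - 2) * θ + r (S θ) ^ 2 * f (S θ) / S θ))) θ := by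
    intro θ hθ
    refine (hdS θ hθ).2.congr_deriv ?_
    rw [(hS θ ⟨hθ.1.le, hθ.2.le⟩).2, inv_neg, inv_div]
  refine ⟨Θ, S, fun θ => r (S θ) ^ 2 * f (S θ) / S θ, ⟨hΘ, hcS,
    cG.comp hcS fun θ hθ => (hS θ hθ).1, hS0, hSΘ, fun θ hθ => (hdS θ hθ).1.1, ?_, ?_, hN',
    hdS', ?_⟩, fun θ hθ => ⟨hSmem θ hθ, (hS θ ⟨hθ.1.le, hθ.2⟩).2, rfl⟩⟩
  · simp [hS0, h.r_init]
  · intro θ hθ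
    have k := hSmem θ hθ
    exact div_pos (mul_pos (pow_pos (h.r_pos _ ⟨(hmem _ k).1.le, k.2⟩) 2)
      (hfp _ (Ico_subset_Icc_self k))) (hs0 _ (Ico_subset_Icc_self k))
  · intro θ hθ
    have hθ' : θ ∈ Ioc 0 Θ := Ioo_subset_Ioc_self hθ
    have k := hSmem θ hθ'
    have hd := (h.gamma_hasDerivAt h2 (hmem _ k) (hs0 _ (Ico_subset_Icc_self k))
      (hfp _ (Ico_subset_Icc_self k))).comp θ (hdS' θ hθ)
    refine hd.congr_deriv ?_
    rw [(hS θ ⟨hθ.1.le, hθ.2.le⟩).2]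
    have k1 := (hN' θ hθ').ne'
    have k2 := (hs0 _ (Ico_subset_Icc_self k)).ne'
    have k3 := hθ.1.ne'
    rw [neg_mul_neg, div_mul_div_comm, mul_comm (S θ * θ) (_ - _ + _),
      mul_div_mul_right _ _ (mul_ne_zero k2 k3)]

end SBranch

namespace ThetaBranch

variable {n : ℕ} {f : ℝ → ℝ} {b β s₀ α₁ α₂ Θ₁ Θ₂ : ℝ} {S₁ S₂ γ₁ γ₂ : ℝ → ℝ}

lemma le_S {α Θ : ℝ} {S γ : ℝ → ℝ} (h : ThetaBranch n f s₀ α Θ S γ) {θ : ℝ}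
    (hθ : θ ∈ Ioc 0 Θ) : s₀ ≤ S θ := by
  rcases hθ.2.eq_or_lt with h0 | h0
  · rw [h0, h.S_end]
  · exact (h.S_gt θ ⟨hθ.1, h0⟩).le

/-- The order of `S` propagates to `γ`. -/
lemma gamma_le (hn : 2 < n) (hf : Continuous f) (h1 : Hf1 f b β) (h2 : Hf2 f) (h5 : Hf5 f β)
    (h6 : Hf6 n f β) (hβ : β ≤ s₀) (H₁ : ThetaBranch n f s₀ α₁ Θ₁ S₁ γ₁)
    (H₂ : ThetaBranch n f s₀ α₂ Θ₂ S₂ γ₂) {x : ℝ} (hx0 : 0 ≤ x) (hx₁ : x ≤ Θ₁) (hx₂ : x ≤ Θ₂)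
    (hS : ∀ θ ∈ Ioo 0 x, S₁ θ ≤ S₂ θ) : γ₁ x ≤ γ₂ x := by
  have hb : 0 < b := h1.2.2.1
  have hbβ : b < β := h1.2.2.2.1
  have hn' : (0:ℝ) < (n : ℝ) - 2 := by
    have : (2:ℝ) < n := by exact_mod_cast hn
    linarith
  have c₁ := H₁.cont_γ.mono (Icc_subset_Icc_right hx₁)
  have c₂ := H₂.cont_γ.mono (Icc_subset_Icc_right hx₂)
  have cS := H₁.cont_S.mono (Icc_subset_Icc_right hx₁)
  have i₁ : ∀ θ ∈ Ioc 0 x, θ ∈ Ioc 0 Θ₁ := fun θ hθ => ⟨hθ.1, hθ.2.trans hx₁⟩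
  have i₂ : ∀ θ ∈ Ioc 0 x, θ ∈ Ioc 0 Θ₂ := fun θ hθ => ⟨hθ.1, hθ.2.trans hx₂⟩
  set A : ℝ → ℝ := fun θ => (2 - (S₁ θ * deriv f (S₁ θ) / f (S₁ θ) - 1) * θ) *
    (θ ^ 2 - ((n : ℝ) - 2) * θ) /
    ((θ ^ 2 - ((n : ℝ) - 2) * θ + γ₁ θ) * (θ ^ 2 - ((n : ℝ) - 2) * θ + γ₂ θ)) with hA
  have hd : ∀ θ ∈ Ioo 0 x, ∃ d, HasDerivAt (fun θ => γ₂ θ - γ₁ θ) d θ ∧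
      A θ * (γ₂ θ - γ₁ θ) ≤ d := by
    intro θ hθ
    refine ⟨_, (H₂.deriv_γ θ ⟨hθ.1, hθ.2.trans_le hx₂⟩).sub
      (H₁.deriv_γ θ ⟨hθ.1, hθ.2.trans_le hx₁⟩), ?_⟩
    have hθ' : θ ∈ Ioc 0 x := Ioo_subset_Ioc_self hθ
    have hN₁ := H₁.N_pos θ (i₁ θ hθ')
    have hN₂ := H₂.N_pos θ (i₂ θ hθ')
    have hγ₂ := H₂.γ_pos θ (i₂ θ hθ')
    have hq : S₂ θ * deriv f (S₂ θ) / f (S₂ θ) ≤ S₁ θ * deriv f (S₁ θ) / f (S₁ θ) :=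
      h5 (hβ.trans (H₁.le_S (i₁ θ hθ'))) (hβ.trans (H₂.le_S (i₂ θ hθ'))) (hS θ hθ)
    have key : γ₂ θ * (2 - (S₁ θ * deriv f (S₁ θ) / f (S₁ θ) - 1) * θ) /
        (θ ^ 2 - ((n : ℝ) - 2) * θ + γ₂ θ) ≤
        γ₂ θ * (2 - (S₂ θ * deriv f (S₂ θ) / f (S₂ θ) - 1) * θ) /
        (θ ^ 2 - ((n : ℝ) - 2) * θ + γ₂ θ) := by
      refine div_le_div_of_nonneg_right (mul_le_mul_of_nonneg_left ?_ hγ₂.le) hN₂.le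
      have := mul_le_mul_of_nonneg_right hq hθ.1.le
      linarith
    refine le_trans (le_of_eq ?_) (sub_le_sub_right key _)
    simp only [hA]
    generalize S₁ θ * deriv f (S₁ θ) / f (S₁ θ) = q
    have k1 := hN₁.ne'
    have k2 := hN₂.ne'
    rw [div_sub_div _ _ k2 k1, div_mul_eq_mul_div, mul_comm (_ + γ₁ θ)]
    ring
  choose! d hd hAd using hd
  have cΔ : ContinuousOn (fun θ => γ₂ θ - γ₁ θ) (Icc 0 x) := c₂.sub c₁
  by_contra hcon
  have hcl : IsCompact (Icc 0 x ∩ (fun θ => γ₂ θ - γ₁ θ) ⁻¹' Ici 0) :=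
    isCompact_Icc.of_isClosed_subset
      (cΔ.preimage_isClosed_of_isClosed isClosed_Icc isClosed_Ici) inter_subset_left
  obtain ⟨a, ⟨ha, haΔ⟩, hmax⟩ := hcl.exists_isGreatest
    ⟨0, ⟨le_rfl, hx0⟩, by simp [H₁.γ_zero, H₂.γ_zero]⟩
  have hlt : ∀ y ∈ Ioc a x, γ₂ y - γ₁ y < 0 := fun y hy => by
    by_contra hyc
    exact absurd (hmax ⟨⟨ha.1.trans hy.1.le, hy.2⟩, not_lt.1 hyc⟩) (not_le.2 hy.1)
  have hax : a < x := lt_of_le_of_ne ha.2 fun h0 => hcon (sub_nonneg.1 (h0 ▸ haΔ))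
  rcases lt_or_ge a ((n : ℝ) - 2) with han | han
  · have hae : a < min x ((n : ℝ) - 2) := lt_min hax han
    have hex := min_le_left x ((n : ℝ) - 2)
    have hmono := le_of_hasDerivAt_nonneg hae.le (cΔ.mono (Icc_subset_Icc ha.1 hex))
      (fun y hy => hd y ⟨ha.1.trans_lt hy.1, hy.2.trans_le hex⟩) fun y hy => by
        have hy' : y ∈ Ioo 0 x := ⟨ha.1.trans_lt hy.1, hy.2.trans_le hex⟩
        have hyn : y ≤ (n : ℝ) - 2 := (hy.2.trans_le (min_le_right _ _)).le
        refine le_trans ?_ (hAd y hy')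
        refine mul_nonneg_of_nonpos_of_nonpos (div_nonpos_of_nonpos_of_nonneg
          (mul_nonpos_of_nonneg_of_nonpos ?_ ?_)
          (mul_pos (H₁.N_pos y (i₁ y (Ioo_subset_Ioc_self hy')))
            (H₂.N_pos y (i₂ y (Ioo_subset_Ioc_self hy')))).le)
          (hlt y ⟨hy.1, hy'.2.le⟩).le
        · have := h5.mul_le_two hn h6 (hβ.trans (H₁.le_S (i₁ y (Ioo_subset_Ioc_self hy'))))
            hy'.1.le hyn
          linarith
        · nlinarith [hy'.1]
    have h3 : 0 ≤ γ₂ a - γ₁ a := haΔ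
    linarith [hlt _ ⟨hae, hex⟩]
  · have ha0 : 0 < a := hn'.trans_le han
    have hsub : Icc a x ⊆ Ioc 0 x := fun y hy => ⟨ha0.trans_le hy.1, hy.2⟩
    have hsub' : Icc a x ⊆ Icc 0 x := Icc_subset_Icc_left ha.1
    have hSβ : ∀ y ∈ Icc a x, β ≤ S₁ y := fun y hy => hβ.trans (H₁.le_S (i₁ y (hsub hy)))
    have cS' := cS.mono hsub'
    have c₁' := c₁.mono hsub'
    have c₂' := c₂.mono hsub'
    have cfd : ContinuousOn (fun θ => deriv f (S₁ θ)) (Icc a x) :=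
      h2.2.2.1.comp cS' fun y hy => mem_Ioi.2 (by linarith [hSβ y hy])
    have cf : ContinuousOn (fun θ => f (S₁ θ)) (Icc a x) := hf.comp_continuousOn cS'
    have cq : ContinuousOn (fun θ => S₁ θ * deriv f (S₁ θ) / f (S₁ θ)) (Icc a x) :=
      (cS'.mul cfd).div cf fun y hy => (h1.2.2.2.2.1 _ (by linarith [hSβ y hy])).ne'
    have cA : ContinuousOn A (Icc a x) := by
      refine ContinuousOn.div (by fun_prop) (by fun_prop) fun y hy => ?_
      exact (mul_pos (H₁.N_pos y (i₁ y (hsub hy))) (H₂.N_pos y (i₂ y (hsub hy)))).ne'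
    obtain ⟨C, hC⟩ := (isCompact_Icc.image_of_continuousOn cA).bddAbove
    have := nonneg_of_mul_le_hasDerivAt (C := C) hax.le (cΔ.mono hsub')
      (fun y hy => hd y ⟨ha0.trans hy.1, hy.2⟩) (fun y hy => by
        refine le_trans ?_ (hAd y ⟨ha0.trans hy.1, hy.2⟩)
        exact mul_le_mul_of_nonpos_right (hC ⟨y, Ioo_subset_Icc_self hy, rfl⟩)
          (hlt y ⟨hy.1, hy.2.le⟩).le) haΔ
    exact hcon (sub_nonneg.1 this)

/-- Branches with different initial values, parametrized by `θ`, do not cross above `β`. -/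
lemma S_lt (hn : 2 < n) (hf : Continuous f) (h1 : Hf1 f b β) (h2 : Hf2 f) (h5 : Hf5 f β)
    (h6 : Hf6 n f β) (hβ : β ≤ s₀) (h12 : α₁ < α₂) (hα₁ : s₀ ≤ α₁)
    (H₁ : ThetaBranch n f s₀ α₁ Θ₁ S₁ γ₁)
    (H₂ : ThetaBranch n f s₀ α₂ Θ₂ S₂ γ₂) {x : ℝ} (hx0 : 0 ≤ x) (hx₁ : x ≤ Θ₁) (hx₂ : x ≤ Θ₂) :
    S₁ x < S₂ x := by
  have hb : 0 < b := h1.2.2.1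
  have hbβ : b < β := h1.2.2.2.1
  have c₁ := H₁.cont_S.mono (Icc_subset_Icc_right hx₁)
  have c₂ := H₂.cont_S.mono (Icc_subset_Icc_right hx₂)
  have pos : ∀ {α Θ : ℝ} {S γ : ℝ → ℝ}, s₀ ≤ α → ThetaBranch n f s₀ α Θ S γ →
      ∀ θ ∈ Icc 0 Θ, 0 < S θ := by
    intro α Θ S γ hα H θ hθ
    rcases hθ.1.eq_or_lt with h0 | h0
    · rw [← h0, H.S_zero]
      linarith
    · linarith [H.le_S ⟨h0, hθ.2⟩]
  have p₁ := pos hα₁ H₁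
  have p₂ := pos (hα₁.trans h12.le) H₂
  by_contra hcon
  have hcl : IsCompact (Icc 0 x ∩ (fun θ => S₁ θ - S₂ θ) ⁻¹' Ici 0) :=
    isCompact_Icc.of_isClosed_subset
      ((c₁.sub c₂).preimage_isClosed_of_isClosed isClosed_Icc isClosed_Ici) inter_subset_left
  obtain ⟨e, ⟨he, heS⟩, hmin⟩ := hcl.exists_isLeast
    ⟨x, ⟨hx0, le_rfl⟩, sub_nonneg.2 (not_lt.1 hcon)⟩
  have hlt : ∀ y ∈ Ico 0 e, S₁ y < S₂ y := fun y hy => by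
    by_contra hyc
    exact absurd (hmin ⟨⟨hy.1, hy.2.le.trans he.2⟩, sub_nonneg.2 (not_lt.1 hyc)⟩)
      (not_le.2 hy.2)
  have heS' : S₂ e ≤ S₁ e := sub_nonneg.1 heS
  have j₁ : ∀ y ∈ Icc 0 e, y ∈ Icc 0 Θ₁ := fun y hy => ⟨hy.1, hy.2.trans (he.2.trans hx₁)⟩
  have j₂ : ∀ y ∈ Icc 0 e, y ∈ Icc 0 Θ₂ := fun y hy => ⟨hy.1, hy.2.trans (he.2.trans hx₂)⟩
  have hmono := le_of_hasDerivAt_nonneg (g := fun θ => Real.log (S₂ θ) - Real.log (S₁ θ))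
    (g' := fun θ => -(S₂ θ * θ / (θ ^ 2 - ((n : ℝ) - 2) * θ + γ₂ θ)) / S₂ θ -
      -(S₁ θ * θ / (θ ^ 2 - ((n : ℝ) - 2) * θ + γ₁ θ)) / S₁ θ) he.1
    (((H₂.cont_S.mono j₂).log fun y hy => (p₂ y (j₂ y hy)).ne').sub
      ((H₁.cont_S.mono j₁).log fun y hy => (p₁ y (j₁ y hy)).ne'))
    (fun y hy => ((H₂.deriv_S y ⟨hy.1, hy.2.trans_le (he.2.trans hx₂)⟩).log
        (p₂ y (j₂ y (Ioo_subset_Icc_self hy))).ne').sub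
      ((H₁.deriv_S y ⟨hy.1, hy.2.trans_le (he.2.trans hx₁)⟩).log
        (p₁ y (j₁ y (Ioo_subset_Icc_self hy))).ne'))
    fun y hy => by
      have hy₁ := j₁ y (Ioo_subset_Icc_self hy)
      have hy₂ := j₂ y (Ioo_subset_Icc_self hy)
      have hγ := gamma_le hn hf h1 h2 h5 h6 hβ H₁ H₂ hy.1.le hy₁.2 hy₂.2 fun z hz =>
        (hlt z ⟨hz.1.le, hz.2.trans hy.2⟩).le
      have hN₁ := H₁.N_pos y ⟨hy.1, hy₁.2⟩
      have k₁ := (p₁ y hy₁).ne'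
      have k₂ := (p₂ y hy₂).ne'
      have : y / (y ^ 2 - ((n : ℝ) - 2) * y + γ₂ y) ≤ y / (y ^ 2 - ((n : ℝ) - 2) * y + γ₁ y) :=
        div_le_div_of_nonneg_left hy.1.le hN₁ (by linarith)
      rw [mul_div_assoc, mul_div_assoc, neg_div, neg_div, mul_div_cancel_left₀ _ k₂,
        mul_div_cancel_left₀ _ k₁]
      linarith
  simp only [H₁.S_zero, H₂.S_zero] at hmono
  have h3 := Real.log_lt_log (by linarith) h12
  have h4 := Real.log_le_log (p₂ e (j₂ e ⟨he.1, le_rfl⟩)) heS'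
  linarith

end ThetaBranch

/-- `f^(n-2) / s^n` is nonincreasing above `β`. -/
lemma pow_mul_le_of_Hf5_Hf6 {n : ℕ} {f : ℝ → ℝ} {b β : ℝ} (hn : 2 < n) (hf : Continuous f)
    (h1 : Hf1 f b β) (h2 : Hf2 f) (h5 : Hf5 f β) (h6 : Hf6 n f β) {s t : ℝ} (hs : β ≤ s)
    (hst : s ≤ t) : f t ^ (n - 2) * s ^ n ≤ f s ^ (n - 2) * t ^ n := by
  have hb : 0 < b := h1.2.2.1
  have hbβ : b < β := h1.2.2.2.1
  have hn' : (0:ℝ) < (n : ℝ) - 2 := by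
    have : (2:ℝ) < n := by exact_mod_cast hn
    linarith
  have hx0 : ∀ x ∈ Icc s t, 0 < x := fun x hx => by linarith [hx.1]
  have hfx : ∀ x ∈ Icc s t, 0 < f x := fun x hx => h1.2.2.2.2.1 x (by linarith [hx.1])
  have hs' : s ∈ Icc s t := ⟨le_rfl, hst⟩
  have ht' : t ∈ Icc s t := ⟨hst, le_rfl⟩
  have hmono := ge_of_hasDerivAt_nonpos
    (g := fun x => ((n : ℝ) - 2) * Real.log (f x) - (n : ℝ) * Real.log x)
    (g' := fun x => ((n : ℝ) - 2) * (deriv f x / f x) - (n : ℝ) * x⁻¹) hst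
    (((hf.continuousOn.log fun x hx => (hfx x hx).ne').const_mul _).sub
      ((continuousOn_id.log fun x hx => (hx0 x hx).ne').const_mul _))
    (fun x hx => (((h2.2.1 x (hx0 x (Ioo_subset_Icc_self hx))).hasDerivAt.log
        (hfx x (Ioo_subset_Icc_self hx)).ne').const_mul _).sub
      ((Real.hasDerivAt_log (hx0 x (Ioo_subset_Icc_self hx)).ne').const_mul _))
    fun x hx => by
      have hx' := Ioo_subset_Icc_self hx
      have hq := h5.le_ratio h6 (hs.trans hx'.1)
      rw [le_div_iff₀ hn'] at hq
      have h0 := hx0 x hx'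
      have : ((n : ℝ) - 2) * (deriv f x / f x) - (n : ℝ) * x⁻¹ =
          (x * deriv f x / f x * ((n : ℝ) - 2) - n) / x := by
        field_simp
      rw [this]
      exact div_nonpos_of_nonpos_of_nonneg (by linarith) h0.le
  rw [← Real.log_le_log_iff (mul_pos (pow_pos (hfx t ht') _) (pow_pos (hx0 s hs') _))
    (mul_pos (pow_pos (hfx s hs') _) (pow_pos (hx0 t ht') _)),
    Real.log_mul (pow_pos (hfx t ht') _).ne' (pow_pos (hx0 s hs') _).ne',
    Real.log_mul (pow_pos (hfx s hs') _).ne' (pow_pos (hx0 t ht') _).ne',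
    Real.log_pow, Real.log_pow, Real.log_pow, Real.log_pow, Nat.cast_sub hn.le]
  push_cast
  linarith

/-- Above `β` the flux `r^(n-1) |u'|` at a given level increases with the initial value. -/
lemma flux_lt_of_Hf5_Hf6 {n : ℕ} {f : ℝ → ℝ} {b β : ℝ} (hn : 2 < n) (hf : Continuous f)
    (h1 : Hf1 f b β) (h2 : Hf2 f) (h5 : Hf5 f β) (h6 : Hf6 n f β) {m₁ m₂ α₁ α₂ s₀ : ℝ}
    {r₁ r₂ p₁ p₂ : ℝ → ℝ} (H₁ : SBranch n f m₁ α₁ r₁ p₁) (H₂ : SBranch n f m₂ α₂ r₂ p₂)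
    (h12 : α₁ < α₂) (hβ : β ≤ s₀) (hm₁ : m₁ < s₀) (hm₂ : m₂ < s₀) (hα₁ : s₀ < α₁) :
    r₁ s₀ ^ (n - 1) * p₁ s₀ < r₂ s₀ ^ (n - 1) * p₂ s₀ := by
  have hb : 0 < b := h1.2.2.1
  have hbβ : b < β := h1.2.2.2.1
  obtain ⟨Θ₁, S₁, γ₁, B₁, hB₁⟩ := H₁.exists_thetaBranch hn hf h1 h2 h5 h6 hm₁ hβ hα₁
  obtain ⟨Θ₂, S₂, γ₂, B₂, hB₂⟩ := H₂.exists_thetaBranch hn hf h1 h2 h5 h6 hm₂ hβ (hα₁.trans h12)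
  have hS : ∀ x, 0 ≤ x → x ≤ Θ₁ → x ≤ Θ₂ → S₁ x < S₂ x := fun x hx0 hx₁ hx₂ =>
    B₁.S_lt hn hf h1 h2 h5 h6 hβ h12 hα₁.le B₂ hx0 hx₁ hx₂
  have hΘ : Θ₁ ≤ Θ₂ := by
    by_contra hcon
    have h3 := hS Θ₂ B₂.pos.le (not_le.1 hcon).le le_rfl
    rw [B₂.S_end] at h3
    linarith [B₁.le_S ⟨B₂.pos, (not_le.1 hcon).le⟩]
  have hγ := B₁.gamma_le hn hf h1 h2 h5 h6 hβ B₂ B₁.pos.le le_rfl hΘ fun θ hθ =>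
    (hS θ hθ.1.le hθ.2.le (hθ.2.le.trans hΘ)).le
  have hlt := hS Θ₁ B₁.pos.le le_rfl hΘ
  obtain ⟨-, e₁, g₁⟩ := hB₁ Θ₁ ⟨B₁.pos, le_rfl⟩
  obtain ⟨hmem, e₂, g₂⟩ := hB₂ Θ₁ ⟨B₁.pos, hΘ⟩
  rw [g₁, g₂] at hγ
  rw [B₁.S_end] at e₁ hlt hγ
  set c := S₂ Θ₁ with hc
  have hs0 : 0 < s₀ := by linarith
  have hc0 : 0 < c := hs0.trans hlt
  have hr₁ := H₁.r_pos s₀ ⟨hm₁.le, hα₁⟩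
  have hr₂ := H₂.r_pos c ⟨(hm₂.trans hlt).le, hmem.2⟩
  have hfs : 0 < f s₀ := h1.2.2.2.2.1 _ (by linarith)
  have hfc : 0 < f c := h1.2.2.2.2.1 _ (by linarith)
  have hpow := pow_mul_le_of_Hf5_Hf6 hn hf h1 h2 h5 h6 hβ hlt.le
  have hflux : r₂ c ^ (n - 1) * p₂ c < r₂ s₀ ^ (n - 1) * p₂ s₀ := by
    have cr := H₂.cont_r.mono (Icc_subset_Icc hm₂.le hmem.2.le)
    have cp := H₂.cont_p.mono (Icc_subset_Icc hm₂.le hmem.2.le)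
    refine gt_of_hasDerivAt_neg hlt (by fun_prop)
      (fun x hx => H₂.flux_hasDerivAt hn.le ⟨hm₂.trans hx.1, hx.2.trans hmem.2⟩) fun x hx => ?_
    have hx' : x ∈ Ioo m₂ α₂ := ⟨hm₂.trans hx.1, hx.2.trans hmem.2⟩
    exact neg_neg_of_pos (div_pos (mul_pos (pow_pos (H₂.r_pos x ⟨hx'.1.le, hx'.2⟩) _)
      (h1.2.2.2.2.1 x (by linarith [hx.1]))) (H₂.p_pos x hx'))
  refine lt_of_le_of_lt ?_ hflux
  obtain ⟨i, rfl⟩ : ∃ i, n = i + 2 := ⟨n - 2, by omega⟩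
  simp only [show i + 2 - 1 = i + 1 by omega, Nat.add_sub_cancel] at hpow ⊢
  rw [div_eq_iff hs0.ne'] at e₁
  rw [div_eq_iff hc0.ne'] at e₂
  have hsq : r₁ s₀ ^ i * s₀ ≤ r₂ c ^ i * c := by
    refine (sq_le_sq₀ (by positivity) (by positivity)).1 ?_
    have h3 := pow_le_pow_left₀ (by positivity) hγ i
    rw [div_pow, div_pow, div_le_div_iff₀ (by positivity) (by positivity), mul_pow, mul_pow] at h3
    have h4 : 0 < f s₀ ^ i * c ^ i := by positivity
    refine le_of_mul_le_mul_right ?_ h4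
    calc (r₁ s₀ ^ i * s₀) ^ 2 * (f s₀ ^ i * c ^ i)
        = ((r₁ s₀ ^ 2) ^ i * f s₀ ^ i * c ^ i) * s₀ ^ 2 := by ring
      _ ≤ ((r₂ c ^ 2) ^ i * f c ^ i * s₀ ^ i) * s₀ ^ 2 := by gcongr
      _ = (r₂ c ^ 2) ^ i * (f c ^ i * s₀ ^ (i + 2)) := by ring
      _ ≤ (r₂ c ^ 2) ^ i * (f s₀ ^ i * c ^ (i + 2)) := by gcongr
      _ = (r₂ c ^ i * c) ^ 2 * (f s₀ ^ i * c ^ i) := by ring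
  calc r₁ s₀ ^ (i + 1) * p₁ s₀ = r₁ s₀ ^ i * (r₁ s₀ * p₁ s₀) := by ring
    _ = (r₁ s₀ ^ i * s₀) * Θ₁ := by rw [e₁]; ring
    _ ≤ (r₂ c ^ i * c) * Θ₁ := mul_le_mul_of_nonneg_right hsq B₁.pos.le
    _ = r₂ c ^ i * (r₂ c * p₂ c) := by rw [e₂]; ring
    _ = r₂ c ^ (i + 1) * p₂ c := by ring

/-- Comparison at the minimum values, starting from a level in `[-β, β]`. -/
lemma min_comparison_of_mem_Icc {n : ℕ} {f : ℝ → ℝ} {b β : ℝ} (hn : 2 ≤ n) (hf : Continuous f)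
    (h1 : Hf1 f b β) (h2 : Hf2 f) (h4 : Hf4 n f β) {m₁ m₂ α₁ α₂ s₀ : ℝ} {r₁ r₂ p₁ p₂ : ℝ → ℝ}
    (H₁ : SBranch n f m₁ α₁ r₁ p₁) (H₂ : SBranch n f m₂ α₂ r₂ p₂) (hs₀ : s₀ ∈ Icc (-β) β)
    (hm₁ : m₁ < -β) (hm₂ : m₂ < -β) (hα₁ : s₀ < α₁) (hα₂ : s₀ < α₂) (hr : r₂ s₀ ≤ r₁ s₀)
    (hy : r₁ s₀ ^ (n - 1) * p₁ s₀ < r₂ s₀ ^ (n - 1) * p₂ s₀) :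
    m₂ < m₁ ∧ Pcoord n f r₂ p₂ m₂ < Pcoord n f r₁ p₁ m₁ := by
  obtain ⟨h3, h5⟩ := middle_comparison hn hf h1 H₁ H₂ hs₀ hm₁ hm₂ hα₁ hα₂ hr hy
  have i₁ : -β < α₁ := hs₀.1.trans_lt hα₁
  have i₂ : -β < α₂ := hs₀.1.trans_lt hα₂
  exact lower_comparison hn hf h1 h2 h4 H₁ H₂ le_rfl hm₁ hm₂ i₁ i₂ h3 h5
    (Pcoord_lt_at_neg hn h1 (H₂.r_pos _ ⟨hm₂.le, i₂⟩) h3 (H₁.p_pos _ ⟨hm₁, i₁⟩).le h5)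

/-- A crossing above `β` keeps `r₂ ≤ r₁` down to `β`. -/
lemma le_at_of_crossing_gt {n : ℕ} {f : ℝ → ℝ} {b β : ℝ} (hn : 2 < n) (hf : Continuous f)
    (h1 : Hf1 f b β) (h2 : Hf2 f) (h5 : Hf5 f β) (h6 : Hf6 n f β) {m₁ m₂ α₁ α₂ s : ℝ}
    {r₁ r₂ p₁ p₂ : ℝ → ℝ} (H₁ : SBranch n f m₁ α₁ r₁ p₁) (H₂ : SBranch n f m₂ α₂ r₂ p₂)
    (h12 : α₁ < α₂) (hs : β ≤ s) (hm₁ : m₁ < β) (hm₂ : m₂ < β) (hα₁ : s < α₁)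
    (hr : r₁ s = r₂ s) : r₂ β ≤ r₁ β := by
  have i₁ : ∀ x ∈ Icc β s, x ∈ Ioo m₁ α₁ := fun x hx =>
    ⟨hm₁.trans_le hx.1, hx.2.trans_lt hα₁⟩
  have i₂ : ∀ x ∈ Icc β s, x ∈ Ioo m₂ α₂ := fun x hx =>
    ⟨hm₂.trans_le hx.1, hx.2.trans_lt (hα₁.trans h12)⟩
  refine (branch_comparison (D := fun _ => 1) (D' := fun _ => 0) (c := β) (d := s)
    (H₁.cont_r.mono fun x hx => Ioo_subset_Icc_self (i₁ x hx))
    (H₂.cont_r.mono fun x hx => Ioo_subset_Icc_self (i₂ x hx))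
    (H₁.cont_p.mono fun x hx => Ioo_subset_Icc_self (i₁ x hx))
    (H₂.cont_p.mono fun x hx => Ioo_subset_Icc_self (i₂ x hx)) continuousOn_const
    (fun x hx => H₁.deriv_r x (i₁ x (Ioo_subset_Icc_self hx)))
    (fun x hx => H₂.deriv_r x (i₂ x (Ioo_subset_Icc_self hx)))
    (fun x hx => H₁.p_pos x (i₁ x (Ioo_subset_Icc_self hx)))
    (fun x _ => hasDerivAt_const x 1) hr.ge one_pos ?_ (fun _ _ _ _ => le_rfl)
    β ⟨le_rfl, hs⟩).1
  intro x hx hrx _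
  have hy := flux_lt_of_Hf5_Hf6 hn hf h1 h2 h5 h6 H₁ H₂ h12 hx.1 (i₁ x hx).1 (i₂ x hx).1
    (i₁ x hx).2
  have hr₂ := H₂.r_pos x ⟨(i₂ x hx).1.le, (i₂ x hx).2⟩
  have hq : r₂ x ^ (n - 1) ≤ r₁ x ^ (n - 1) := pow_le_pow_left₀ hr₂.le hrx _
  have hq2 : 0 < r₂ x ^ (n - 1) := pow_pos hr₂ _
  by_contra hcon
  exact absurd hy (not_lt.2 (mul_le_mul hq (not_lt.1 hcon) (H₂.p_pos x (i₂ x hx)).le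
    (hq2.le.trans hq)))

lemma FirstBranch.Pfun_eq {n : ℕ} {f : ℝ → ℝ} {b β α T : ℝ} {v ρ : ℝ → ℝ} (hn : 2 ≤ n)
    (hf : Continuous f) (h1 : Hf1 f b β) (h : FirstBranch n f β α v T)
    (hρ : InvBranch v ρ 0 T (v T) α) :
    Pfun n f ρ (v T) = Pcoord n f ρ (fun s => -deriv v (ρ s)) (v T) := by
  have hp : -deriv v (ρ (v T)) = 0 := (h.sBranch hn hf h1 hρ).p_min
  simp [Pfun, Pcoord, h.deriv_inv_min h1 hρ, neg_eq_zero.1 hp]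

end Paper

/-- **Proposition 4.8.** Under (f1)–(f3) and (f4), or (f1), (f2) and (f5), (f6) with
`n > 2`: comparison of the `P` functional at the first minimum values. Here `ρ_j` is the
inverse of `u_j` on its first decreasing branch `[0, T₁(α_j)]` and
`m_j = u_j(T₁(α_j))`. -/
theorem P_first_min_comparison
    (n : ℕ) (hn : 2 ≤ n)
    (f : ℝ → ℝ) (b β : ℝ) (hf : Continuous f)
    (h1 : Hf1 f b β) (h2 : Hf2 f)
    (hcase : (Hf3 f β ∧ Hf4 n f β) ∨ (Hf5 f β ∧ Hf6 n f β ∧ 2 < n))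
    (u : ℝ → ℝ → ℝ) (hu : Family n f u)
    (k : ℕ) (hk : 2 ≤ k) (αs : ℝ) (hαs : αs ∈ Gk u k)
    (a δ₁ : ℝ) (hδ₁ : DeltaOneLemma f β u k αs a δ₁)
    (α₁ : ℝ) (hα₁ : α₁ ∈ Ioo (αs - δ₁) (αs + δ₁))
    (α₂ : ℝ) (hα₂ : α₂ ∈ Ioo (αs - δ₁) (αs + δ₁)) (h12 : α₁ < α₂)
    (ρ₁ ρ₂ : ℝ → ℝ)
    (hρ₁ : InvBranch (u α₁) ρ₁ 0 (Tk u 1 α₁) (u α₁ (Tk u 1 α₁)) α₁)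
    (hρ₂ : InvBranch (u α₂) ρ₂ 0 (Tk u 1 α₂) (u α₂ (Tk u 1 α₂)) α₂) :
    u α₂ (Tk u 1 α₂) < u α₁ (Tk u 1 α₁) ∧
      Pfun n f ρ₂ (u α₂ (Tk u 1 α₂)) < Pfun n f ρ₁ (u α₁ (Tk u 1 α₁)) := by
  have h4 : Hf4 n f β := hcase.elim (fun h => h.2) fun h =>
    Hf4_of_Hf5_Hf6 hf h1 h2 h.2.2 h.1 h.2.1
  have hβ : 0 < β := h1.2.2.1.trans h1.2.2.2.1
  have hαs0 := pos_of_mem_Gk k hαs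
  have hβ₁ := hδ₁.lt_init hn hf h1 h2 hu hk hαs0 hα₁
  have hβ₂ := hδ₁.lt_init hn hf h1 h2 hu hk hαs0 hα₂
  obtain ⟨t, ht0, ht₁, ht₂, ht⟩ := hδ₁.exists_crossing hk hα₁ hα₂ h12
  have B₁ := firstBranch_Tk_one hn hf h1 h2 (hu.radialSol (hβ.trans hβ₁)) hβ₁
    (hδ₁.manyExtrema hk hα₁) (ht0.trans ht₁) hρ₁
  have B₂ := firstBranch_Tk_one hn hf h1 h2 (hu.radialSol (hβ.trans hβ₂)) hβ₂
    (hδ₁.manyExtrema hk hα₂) (ht0.trans ht₂) hρ₂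
  have H₁ := B₁.sBranch hn hf h1 hρ₁
  have H₂ := B₂.sBranch hn hf h1 hρ₂
  rw [B₁.Pfun_eq hn hf h1 hρ₁, B₂.Pfun_eq hn hf h1 hρ₂]
  have k₁ : t ∈ Icc 0 (Tk u 1 α₁) := ⟨ht0.le, ht₁.le⟩
  have k₂ : t ∈ Icc 0 (Tk u 1 α₂) := ⟨ht0.le, ht₂.le⟩
  have hlow₁ := B₁.anti k₁ ⟨B₁.pos.le, le_rfl⟩ ht₁
  have hlow₂ := B₂.anti k₂ ⟨B₂.pos.le, le_rfl⟩ ht₂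
  have hup := (B₁.anti ⟨le_rfl, B₁.pos.le⟩ k₁ ht0).trans_le
    (B₁.mem_Icc ⟨le_rfl, B₁.pos.le⟩).2
  have hcross : ρ₁ (u α₁ t) = ρ₂ (u α₁ t) := by
    rw [B₁.inv_apply hρ₁ k₁, ht, B₂.inv_apply hρ₂ k₂]
  obtain ⟨s, hs₁, hs₂, hsα, hr, hlt, hp⟩ := exists_first_crossing hf H₁ H₂ h12 hlow₁
    (ht ▸ hlow₂) hup hcross
  have hr₁ := H₁.r_pos s ⟨hs₁.le, hsα⟩
  have hy : ρ₁ s ^ (n - 1) * -deriv (u α₁) (ρ₁ s) < ρ₂ s ^ (n - 1) * -deriv (u α₂) (ρ₂ s) := by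
    have := mul_lt_mul_of_pos_left hp (pow_pos hr₁ (n - 1))
    rwa [hr] at this ⊢
  rcases lt_or_ge s (-β) with hsβ | hsβ
  · exact lower_comparison hn hf h1 h2 h4 H₁ H₂ hsβ.le hs₁ hs₂ hsα (hsα.trans h12) hr.ge hy
      (Pcoord_lt_at_crossing hf h1 hsβ hr₁ hr (H₁.p_pos s ⟨hs₁, hsα⟩).le hp)
  rcases le_or_gt s β with hsβ' | hsβ'
  · exact min_comparison_of_mem_Icc hn hf h1 h2 h4 H₁ H₂ ⟨hsβ, hsβ'⟩ B₁.min_lt B₂.min_lt hsα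
      (hsα.trans h12) hr.ge hy
  rcases hcase with ⟨h3, -⟩ | ⟨h5, h6, hn2⟩
  · exact absurd (crossing_le_of_Hf3 hn h1 h2 h3 B₁ B₂ hρ₁ hρ₂ h12 ⟨hs₁, hsα⟩ hs₂ hr hlt hp)
      (not_le.2 hsβ')
  · have hm₁ : u α₁ (Tk u 1 α₁) < β := by linarith [B₁.min_lt]
    have hm₂ : u α₂ (Tk u 1 α₂) < β := by linarith [B₂.min_lt]
    exact min_comparison_of_mem_Icc hn hf h1 h2 h4 H₁ H₂ ⟨by linarith, le_rfl⟩ B₁.min_lt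
      B₂.min_lt hβ₁ hβ₂
      (le_at_of_crossing_gt hn2 hf h1 h2 h5 h6 H₁ H₂ h12 hsβ'.le hm₁ hm₂ hsα hr)
      (flux_lt_of_Hf5_Hf6 hn2 hf h1 h2 h5 h6 H₁ H₂ h12 le_rfl hm₁ hm₂ hβ₁)
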